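/- arXiv:1512.06047 — 7 statements merged into one kernel-verified Lean document; each statement's English description precedes it below -/
import Mathlib

section
/- Let α₁,…,α_k be K-bilinear maps A × A → A (with α₀(a,b) = a·b) such that D_i = 0 for all 1 ≤ i ≤ k. Define the trilinear map E_{k+1}(a₁,a₂,a₃) = Σ_{s+r=k+1, s≥1, r≥1} [α_r(α_s(a₁,a₂),a₃) − α_r(a₁,α_s(a₂,a₃))]. Then E_{k+1} is a Hochschild 3-cocycle: δE_{k+1} = 0, i.e. for all a₀,a₁,a₂,a₃ ∈ A, a₀·E_{k+1}(a₁,a₂,a₃) − E_{k+1}(a₀·a₁,a₂,a₃) + E_{k+1}(a₀,a₁·a₂,a₃) − E_{k+1}(a₀,a₁,a₂·a₃) + E_{k+1}(a₀,a₁,a₂)·a₃ = 0. -/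
/-- The trilinear map `E_{k+1}(a₁,a₂,a₃) = Σ_{s+r=k+1, s,r ≥ 1}
[α_r(α_s(a₁,a₂),a₃) − α_r(a₁,α_s(a₂,a₃))]` (here `r = k+1-s` with `s ∈ [1,k]`). -/
def Esum {K A : Type*} [CommRing K] [Ring A] [Algebra K A]
    (α : ℕ → A →ₗ[K] A →ₗ[K] A) (k : ℕ) (x y z : A) : A :=
  ∑ s ∈ Finset.Icc 1 k, (α (k + 1 - s) (α s x y) z - α (k + 1 - s) x (α s y z))

open Finset in
theorem triple_cyc {A : Type*} [AddCommGroup A] (n : ℕ) (f : ℕ → ℕ → ℕ → A) :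
    ∑ p ∈ Finset.HasAntidiagonal.antidiagonal n, ∑ q ∈ Finset.HasAntidiagonal.antidiagonal p.2, f p.1 q.1 q.2 =
    ∑ p ∈ Finset.HasAntidiagonal.antidiagonal n, ∑ q ∈ Finset.HasAntidiagonal.antidiagonal p.2, f q.1 q.2 p.1 := by
  rw [Finset.sum_sigma', Finset.sum_sigma']
  refine Finset.sum_bij' (fun x _ => ⟨(x.2.2, x.1.1 + x.2.1), (x.1.1, x.2.1)⟩)
    (fun x _ => ⟨(x.2.1, x.2.2 + x.1.1), (x.2.2, x.1.1)⟩) ?_ ?_ ?_ ?_ ?_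
  all_goals
    rintro ⟨⟨a, b⟩, ⟨c, d⟩⟩ h
    simp only [mem_sigma, Finset.HasAntidiagonal.mem_antidiagonal] at h ⊢
    try obtain ⟨h1, h2⟩ := h
    try subst h2
    try subst h1
    try simp [add_comm, add_left_comm]

open Finset in
theorem triple_swap {A : Type*} [AddCommGroup A] (n : ℕ) (f : ℕ → ℕ → ℕ → A) :
    ∑ p ∈ Finset.HasAntidiagonal.antidiagonal n, ∑ q ∈ Finset.HasAntidiagonal.antidiagonal p.2, f p.1 q.1 q.2 =
    ∑ p ∈ Finset.HasAntidiagonal.antidiagonal n, ∑ q ∈ Finset.HasAntidiagonal.antidiagonal p.2, f q.2 q.1 p.1 := by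
  rw [triple_cyc]
  refine Finset.sum_congr rfl fun p _ => ?_
  exact (Finset.Nat.sum_antidiagonal_swap (n := p.2) (f := fun q => f q.1 q.2 p.1)).symm

/-- The full associator coefficient. -/
def Fsum {K A : Type*} [CommRing K] [Ring A] [Algebra K A]
    (α : ℕ → A →ₗ[K] A →ₗ[K] A) (n : ℕ) (x y z : A) : A :=
  ∑ q ∈ Finset.HasAntidiagonal.antidiagonal n, (α q.1 (α q.2 x y) z - α q.1 x (α q.2 y z))

open Finset in
theorem Fsum_pentagon {K A : Type*} [CommRing K] [Ring A] [Algebra K A]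
    (α : ℕ → A →ₗ[K] A →ₗ[K] A) (n : ℕ) (a b c d : A) :
    ∑ p ∈ Finset.HasAntidiagonal.antidiagonal n, (α p.1 a (Fsum α p.2 b c d) - Fsum α p.2 (α p.1 a b) c d
      + Fsum α p.2 a (α p.1 b c) d - Fsum α p.2 a b (α p.1 c d)
      + α p.1 (Fsum α p.2 a b c) d) = 0 := by
  simp only [Fsum, map_sum, map_sub, LinearMap.sum_apply, LinearMap.sub_apply,
    sum_add_distrib, sum_sub_distrib]
  rw [triple_cyc n (fun i r s => α i a (α r (α s b c) d)),
    triple_cyc n (fun i r s => α i a (α r b (α s c d))),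
    triple_cyc n (fun i r s => α i (α r (α s a b) c) d),
    triple_cyc n (fun i r s => α i (α r a (α s b c)) d),
    triple_swap n (fun i r s => α r (α i a b) (α s c d))]
  abel

open Finset in
theorem Fsum_eq_range {K A : Type*} [CommRing K] [Ring A] [Algebra K A]
    (α : ℕ → A →ₗ[K] A →ₗ[K] A) (n : ℕ) (x y z : A) :
    Fsum α n x y z = ∑ s ∈ range (n + 1),
      (α (n - s) (α s x y) z - α (n - s) x (α s y z)) := by
  rw [Fsum, ← Finset.Nat.sum_antidiagonal_swap, Finset.Nat.sum_antidiagonal_eq_sum_range_succ_mk]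
  rfl

open Finset in
theorem Fsum_eq_Esum {K A : Type*} [CommRing K] [Ring A] [Algebra K A]
    (α : ℕ → A →ₗ[K] A →ₗ[K] A) (hα0 : ∀ a b : A, α 0 a b = a * b) (k : ℕ) (x y z : A) :
    Fsum α (k + 1) x y z = Esum α k x y z + (α (k + 1) (x * y) z - α (k + 1) x (y * z))
      + (α (k + 1) x y * z - x * α (k + 1) y z) := by
  rw [Fsum_eq_range, sum_range_succ, sum_range_succ', Esum]
  have h : Icc 1 k = Ico (0 + 1) (k + 1) := by ext; simp
  rw [h, ← Finset.sum_Ico_add' _ 0 k 1, Nat.Ico_zero_eq_range]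
  simp [hα0]

/-- If the associativity obstructions `D_i` vanish for `1 ≤ i ≤ k`, then
`E_{k+1}` is a Hochschild 3-cocycle. -/
theorem obstruction_is_hochschild_three_cocycle
    {K A : Type*} [CommRing K] [Ring A] [Algebra K A]
    (α : ℕ → A →ₗ[K] A →ₗ[K] A)
    (hα0 : ∀ a b : A, α 0 a b = a * b)
    (k : ℕ)
    (hD : ∀ i, 1 ≤ i → i ≤ k → ∀ a₁ a₂ a₃ : A,
      ∑ s ∈ Finset.range (i + 1),
        (α (i - s) (α s a₁ a₂) a₃ - α (i - s) a₁ (α s a₂ a₃)) = 0) :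
    ∀ a₀ a₁ a₂ a₃ : A,
      a₀ * Esum α k a₁ a₂ a₃ - Esum α k (a₀ * a₁) a₂ a₃ + Esum α k a₀ (a₁ * a₂) a₃
        - Esum α k a₀ a₁ (a₂ * a₃) + Esum α k a₀ a₁ a₂ * a₃ = 0 := by
  intro a b c d
  have hF : ∀ i, i ≤ k → ∀ x y z, Fsum α i x y z = 0 := by
    intro i hi x y z
    rcases Nat.eq_zero_or_pos i with rfl | h
    · simp [Fsum, hα0, mul_assoc]
    · rw [Fsum_eq_range]; exact hD i h hi x y z
  have hP := Fsum_pentagon α (k + 1) a b c d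
  rw [Finset.sum_eq_single (0, k + 1)] at hP
  · simp only [hα0, Fsum_eq_Esum α hα0] at hP
    rw [← hP]
    simp only [mul_add, add_mul, mul_sub, sub_mul, mul_assoc]
    abel
  · rintro ⟨i, j⟩ h hne
    have hj : j ≤ k := by
      simp only [Finset.HasAntidiagonal.mem_antidiagonal, ne_eq, Prod.mk.injEq] at h hne
      omega
    simp [hF j hj]
  · simp
end

section
/- Suppose every Hochschild 3-cocycle of A is a Hochschild 3-coboundary (i.e. H³(A,A) = 0). Then every Hochschild 2-cocycle α is the infinitesimal of an associative formal deformation: there exists a sequence of K-bilinear maps α_r : A × A → A (r ≥ 1) with α₁ = α and α₀(a,b) = a·b such that D_k = 0 for all k ≥ 1. -/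
namespace HochDef

open Finset

/-- Triple sum over `i + s + r = n`. -/
noncomputable def T {M : Type*} [AddCommGroup M] (n : ℕ) (f : ℕ → ℕ → ℕ → M) : M :=
  ∑ p ∈ antidiagonal n, ∑ q ∈ antidiagonal p.2, f p.1 q.1 q.2

theorem T_swap {M : Type*} [AddCommGroup M] (n : ℕ) (f : ℕ → ℕ → ℕ → M) :
    T n f = T n (fun i s r => f i r s) := by
  unfold T
  refine Finset.sum_congr rfl fun p _ => ?_
  exact (Finset.Nat.sum_antidiagonal_swap (n := p.2) (f := fun q => f p.1 q.1 q.2)).symm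

theorem T_swap' {M : Type*} [AddCommGroup M] (n : ℕ) (f : ℕ → ℕ → ℕ → M) :
    T n f = T n (fun i s r => f s i r) := by
  unfold T
  rw [Finset.sum_sigma', Finset.sum_sigma']
  refine Finset.sum_bij' (fun x _ => ⟨(x.2.1, x.1.1 + x.2.2), (x.1.1, x.2.2)⟩)
    (fun x _ => ⟨(x.2.1, x.1.1 + x.2.2), (x.1.1, x.2.2)⟩) ?_ ?_ ?_ ?_ ?_
  · rintro ⟨⟨a, b⟩, ⟨c, d⟩⟩ h
    simp only [mem_sigma, HasAntidiagonal.mem_antidiagonal] at h ⊢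
    obtain ⟨h1, h2⟩ := h
    refine ⟨?_, trivial⟩
    omega
  · rintro ⟨⟨a, b⟩, ⟨c, d⟩⟩ h
    simp only [mem_sigma, HasAntidiagonal.mem_antidiagonal] at h ⊢
    obtain ⟨h1, h2⟩ := h
    refine ⟨?_, trivial⟩
    omega
  · rintro ⟨⟨a, b⟩, ⟨c, d⟩⟩ h
    simp only [mem_sigma, HasAntidiagonal.mem_antidiagonal] at h
    obtain ⟨h1, rfl⟩ := h
    rfl
  · rintro ⟨⟨a, b⟩, ⟨c, d⟩⟩ h
    simp only [mem_sigma, HasAntidiagonal.mem_antidiagonal] at h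
    obtain ⟨h1, rfl⟩ := h
    rfl
  · rintro ⟨⟨a, b⟩, ⟨c, d⟩⟩ h
    rfl

theorem T_add {M : Type*} [AddCommGroup M] (n : ℕ) (f g : ℕ → ℕ → ℕ → M) :
    T n (fun i s r => f i s r + g i s r) = T n f + T n g := by
  simp [T, Finset.sum_add_distrib]

theorem T_sub {M : Type*} [AddCommGroup M] (n : ℕ) (f g : ℕ → ℕ → ℕ → M) :
    T n (fun i s r => f i s r - g i s r) = T n f - T n g := by
  simp [T, Finset.sum_sub_distrib]

variable {K A : Type*} [CommRing K] [Ring A] [Algebra K A]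

/-- `a b c ↦ g a (f b c)` -/
noncomputable def rcomp (f g : A →ₗ[K] A →ₗ[K] A) : A →ₗ[K] A →ₗ[K] A →ₗ[K] A where
  toFun a := f.compr₂ (g a)
  map_add' x y := by ext; simp
  map_smul' x y := by ext; simp

set_option synthInstance.maxHeartbeats 400000 in
set_option maxSynthPendingDepth 5 in
/-- The obstruction. -/
noncomputable def D (σ : ℕ → A →ₗ[K] A →ₗ[K] A) (n : ℕ) : A →ₗ[K] A →ₗ[K] A →ₗ[K] A :=
  ∑ p ∈ antidiagonal n, ((σ p.1).compr₂ (σ p.2) - rcomp (σ p.1) (σ p.2))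

theorem D_apply (σ : ℕ → A →ₗ[K] A →ₗ[K] A) (n : ℕ) (a b c : A) :
    D σ n a b c = ∑ p ∈ antidiagonal n, (σ p.2 (σ p.1 a b) c - σ p.2 a (σ p.1 b c)) := by
  simp only [D, LinearMap.sum_apply]
  rfl

theorem D_congr (σ τ : ℕ → A →ₗ[K] A →ₗ[K] A) (n : ℕ) (h : ∀ m ≤ n, σ m = τ m) :
    D σ n = D τ n := by
  unfold D
  refine Finset.sum_congr rfl fun p hp => ?_
  rw [HasAntidiagonal.mem_antidiagonal] at hp
  rw [h p.1 (by omega), h p.2 (by omega)]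

theorem pentagon (σ : ℕ → A →ₗ[K] A →ₗ[K] A) (n : ℕ) (a b c d : A) :
    ∑ p ∈ antidiagonal n, (σ p.1 a (D σ p.2 b c d) - D σ p.2 (σ p.1 a b) c d
      + D σ p.2 a (σ p.1 b c) d - D σ p.2 a b (σ p.1 c d) + σ p.1 (D σ p.2 a b c) d) = 0 := by
  have key : ∑ p ∈ antidiagonal n, (σ p.1 a (D σ p.2 b c d) - D σ p.2 (σ p.1 a b) c d
      + D σ p.2 a (σ p.1 b c) d - D σ p.2 a b (σ p.1 c d) + σ p.1 (D σ p.2 a b c) d) =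
      T n (fun i s r =>
        (σ i a (σ r (σ s b c) d) - σ i a (σ r b (σ s c d)))
        - (σ r (σ s (σ i a b) c) d - σ r (σ i a b) (σ s c d))
        + (σ r (σ s a (σ i b c)) d - σ r a (σ s (σ i b c) d))
        - (σ r (σ s a b) (σ i c d) - σ r a (σ s b (σ i c d)))
        + (σ i (σ r (σ s a b) c) d - σ i (σ r a (σ s b c)) d)) := by
    unfold T
    refine Finset.sum_congr rfl fun p _ => ?_
    simp only [D_apply, map_sum, map_sub, LinearMap.sum_apply, LinearMap.sub_apply,
      Finset.sum_add_distrib, Finset.sum_sub_distrib]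
  rw [key]
  simp only [T_add, T_sub]
  have rot : ∀ f : ℕ → ℕ → ℕ → A, T n f = T n (fun i s r => f r i s) := fun f => by
    rw [T_swap' n f, T_swap n]
  have e1 := T_swap n (fun i s r => σ i a (σ r (σ s b c) d))
  have e1' := rot (fun i s r => σ i a (σ s (σ r b c) d))
  have e1 : T n (fun i s r => σ i a (σ r (σ s b c) d)) =
      T n (fun i s r => σ r a (σ s (σ i b c) d)) := by
    rw [rot, T_swap']
  have e2 : T n (fun i s r => σ i a (σ r b (σ s c d))) =
      T n (fun i s r => σ r a (σ s b (σ i c d))) := by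
    rw [rot, T_swap']
  have e3 : T n (fun i s r => σ i (σ r (σ s a b) c) d) =
      T n (fun i s r => σ r (σ s (σ i a b) c) d) := by
    rw [rot, T_swap']
  have e4 : T n (fun i s r => σ r (σ i a b) (σ s c d)) =
      T n (fun i s r => σ r (σ s a b) (σ i c d)) := by
    rw [T_swap']
  have e5 : T n (fun i s r => σ i (σ r a (σ s b c)) d) =
      T n (fun i s r => σ r (σ s a (σ i b c)) d) := by
    rw [rot, T_swap']
  rw [e1, e2, e3, e4, e5]
  abel

theorem D_cocycle (σ : ℕ → A →ₗ[K] A →ₗ[K] A) (n : ℕ) (h0 : ∀ a b, σ 0 a b = a * b)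
    (h : ∀ m < n, D σ m = 0) (a b c d : A) :
    a * D σ n b c d - D σ n (a * b) c d + D σ n a (b * c) d
      - D σ n a b (c * d) + D σ n a b c * d = 0 := by
  have hp := pentagon σ n a b c d
  rw [Finset.sum_eq_single (0, n)] at hp
  · simpa only [h0] using hp
  · rintro ⟨i, j⟩ hij hne
    rw [HasAntidiagonal.mem_antidiagonal] at hij
    have : j < n := by
      rcases Nat.eq_zero_or_pos i with rfl | hi
      · exact absurd (by simpa using hij) (fun hj : j = n => hne (by rw [hj]))
      · simp only at hij
        omega
    simp [h j this]
  · intro hn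
    simp at hn

theorem D_update (σ : ℕ → A →ₗ[K] A →ₗ[K] A) (n : ℕ) (hn : 1 ≤ n) (h0 : ∀ a b, σ 0 a b = a * b)
    (hσ : σ n = 0) (β : A →ₗ[K] A →ₗ[K] A) (a b c : A) :
    D (Function.update σ n β) n a b c = D σ n a b c -
      (a * β b c - β (a * b) c + β a (b * c) - β a b * c) := by
  obtain ⟨m, rfl⟩ : ∃ m, n = m + 1 := ⟨n - 1, by omega⟩
  rw [D_apply, D_apply,
    Finset.Nat.sum_antidiagonal_eq_sum_range_succ
      (fun s r => σ r (σ s a b) c - σ r a (σ s b c)),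
    Finset.Nat.sum_antidiagonal_eq_sum_range_succ
      (fun s r => Function.update σ (m+1) β r (Function.update σ (m+1) β s a b) c
        - Function.update σ (m+1) β r a (Function.update σ (m+1) β s b c)),
    Finset.sum_range_succ, Finset.sum_range_succ', Finset.sum_range_succ, Finset.sum_range_succ']
  have : ∀ k ∈ range m, (fun k => Function.update σ (m+1) β (m + 1 - (k + 1))
        (Function.update σ (m+1) β (k+1) a b) c
        - Function.update σ (m+1) β (m + 1 - (k + 1)) a (Function.update σ (m+1) β (k+1) b c)) k =
      (fun k => σ (m + 1 - (k + 1)) (σ (k+1) a b) c - σ (m + 1 - (k + 1)) a (σ (k+1) b c)) k := by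
    intro k hk
    rw [mem_range] at hk
    have h1 : m + 1 - (k + 1) ≠ m + 1 := by omega
    have h2 : k + 1 ≠ m + 1 := by omega
    simp only [Function.update_of_ne h1, Function.update_of_ne h2]
  rw [Finset.sum_congr rfl this]
  have h3 : (0 : ℕ) ≠ m + 1 := by omega
  simp only [Nat.sub_self, Nat.sub_zero, Function.update_self, Function.update_of_ne h3, h0, hσ,
    LinearMap.zero_apply, mul_zero, zero_mul, sub_zero, add_zero]
  abel

open Classical in
/-- One step of the recursion. -/
noncomputable def step (α₁ : A →ₗ[K] A →ₗ[K] A) (σ : ℕ → A →ₗ[K] A →ₗ[K] A) (n : ℕ) :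
    A →ₗ[K] A →ₗ[K] A :=
  if n = 0 then LinearMap.mul K A else if n = 1 then α₁ else
    Classical.epsilon (fun β => D (Function.update σ n β) n = 0)

/-- The deformation. -/
noncomputable def seq (α₁ : A →ₗ[K] A →ₗ[K] A) (n : ℕ) : A →ₗ[K] A →ₗ[K] A :=
  step α₁ (fun m => if _h : m < n then seq α₁ m else 0) n
termination_by n

end HochDef

/-- if every Hochschild 3-cocycle of `A` is a 3-coboundary
(`H³(A,A) = 0`), then every Hochschild 2-cocycle `α₁` is the infinitesimal of an
associative formal deformation of `A`. -/
theorem two_cocycle_integrates_of_H3_zero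
    {K A : Type*} [CommRing K] [Ring A] [Algebra K A]
    (h3 : ∀ γ : A →ₗ[K] A →ₗ[K] A →ₗ[K] A,
      (∀ a₀ a₁ a₂ a₃ : A,
        a₀ * γ a₁ a₂ a₃ - γ (a₀ * a₁) a₂ a₃ + γ a₀ (a₁ * a₂) a₃
          - γ a₀ a₁ (a₂ * a₃) + γ a₀ a₁ a₂ * a₃ = 0) →
      ∃ β : A →ₗ[K] A →ₗ[K] A, ∀ a b c : A,
        γ a b c = a * β b c - β (a * b) c + β a (b * c) - β a b * c)
    (α₁ : A →ₗ[K] A →ₗ[K] A)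
    (hcoc : ∀ a b c : A,
      a * α₁ b c - α₁ (a * b) c + α₁ a (b * c) - α₁ a b * c = 0) :
    ∃ α : ℕ → A →ₗ[K] A →ₗ[K] A,
      α 1 = α₁ ∧ (∀ a b : A, α 0 a b = a * b) ∧
      ∀ k, 1 ≤ k → ∀ a₁' a₂ a₃ : A,
        ∑ s ∈ Finset.range (k + 1),
          (α (k - s) (α s a₁' a₂) a₃ - α (k - s) a₁' (α s a₂ a₃)) = 0 := by
  classical
  have h0 : ∀ a b : A, HochDef.seq α₁ 0 a b = a * b := by
    intro a b
    rw [HochDef.seq]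
    simp [HochDef.step]
  have h1 : HochDef.seq α₁ 1 = α₁ := by
    rw [HochDef.seq]
    simp [HochDef.step]
  have hD : ∀ n, HochDef.D (HochDef.seq α₁) n = 0 := by
    intro n
    induction n using Nat.strong_induction_on with
    | _ n ih =>
    rcases Nat.lt_or_ge n 2 with hn | hn
    · interval_cases n
      · ext a b c
        rw [HochDef.D_apply]
        simp [h0, mul_assoc]
      · ext a b c
        rw [HochDef.D_apply, Finset.Nat.sum_antidiagonal_eq_sum_range_succ
          (fun s r => HochDef.seq α₁ r (HochDef.seq α₁ s a b) c
            - HochDef.seq α₁ r a (HochDef.seq α₁ s b c))]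
        simp only [Finset.sum_range_succ, Finset.sum_range_zero, Nat.sub_zero, Nat.sub_self, h0, h1,
          LinearMap.zero_apply]
        have := hcoc a b c
        refine Eq.trans ?_ (neg_eq_zero.mpr this)
        abel
    · let σ : ℕ → A →ₗ[K] A →ₗ[K] A := fun m => if _h : m < n then HochDef.seq α₁ m else 0
      have hσlt : ∀ m < n, σ m = HochDef.seq α₁ m := fun m hm => by simp [σ, hm]
      have hσn : σ n = 0 := by simp [σ]
      have hσ0 : ∀ a b, σ 0 a b = a * b := by
        intro a b
        rw [hσlt 0 (by omega), h0]
      have hseq : HochDef.seq α₁ n =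
          Classical.epsilon (fun β => HochDef.D (Function.update σ n β) n = 0) := by
        rw [HochDef.seq]
        simp only [HochDef.step, if_neg (show n ≠ 0 by omega), if_neg (show n ≠ 1 by omega)]
        rfl
      have hex : ∃ β, HochDef.D (Function.update σ n β) n = 0 := by
        obtain ⟨β, hβ⟩ := h3 (HochDef.D σ n) (HochDef.D_cocycle σ n hσ0 (fun m hm => by
          rw [← ih m hm]
          exact HochDef.D_congr _ _ _ fun j hj => hσlt j (by omega)))
        refine ⟨β, ?_⟩
        ext a b c
        rw [HochDef.D_update σ n (by omega) hσ0 hσn, hβ a b c, sub_self]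
        rfl
      have hs := Classical.epsilon_spec hex
      rw [← hseq] at hs
      rw [← hs]
      refine HochDef.D_congr _ _ _ fun j hj => ?_
      rcases Nat.lt_or_ge j n with hjn | hjn
      · rw [Function.update_of_ne (by omega), hσlt j hjn]
      · obtain rfl : j = n := by omega
        rw [Function.update_self]
  refine ⟨HochDef.seq α₁, h1, h0, fun k _ a b c => ?_⟩
  rw [← Finset.Nat.sum_antidiagonal_eq_sum_range_succ
    (fun s r => HochDef.seq α₁ r (HochDef.seq α₁ s a b) c
      - HochDef.seq α₁ r a (HochDef.seq α₁ s b c)), ← HochDef.D_apply, hD k]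
  rfl
end

section
/- Let K be a commutative ring containing the rationals (a ℚ-algebra), A an associative K-algebra, and u, v two commuting K-linear derivations of A (u∘v = v∘u). Then the exponential deformation a*b = exp(h u⌣v)(a,b) = a·b + Σ_{r≥1} (h^r/r!) u^r(a)·v^r(b) is an associative formal deformation of A: the bilinear maps α_r(a,b) = (1/r!) u^r(a)·v^r(b) satisfy D_k(a₁,a₂,a₃) = Σ_{s+r=k, s,r≥0} [α_r(α_s(a₁,a₂),a₃) − α_r(a₁,α_s(a₂,a₃))] = 0 for every k ≥ 1. -/
/-- The terms `α_r(a,b) = (1/r!)·u^r(a)·v^r(b)` of the exponential deformation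
`exp(h u⌣v)` built from two derivations `u`, `v`. -/
noncomputable def alphaExp {K A : Type*} [CommRing K] [Algebra ℚ K] [Ring A] [Algebra K A]
    (u v : Module.End K A) (r : ℕ) (a b : A) : A :=
  algebraMap ℚ K ((r.factorial : ℚ)⁻¹) • ((u ^ r) a * (v ^ r) b)

lemma leibniz_pow_aux {K A : Type*} [CommRing K] [Ring A] [Algebra K A]
    (u : Module.End K A) (hu : ∀ a b : A, u (a * b) = u a * b + a * u b) (n : ℕ) (a b : A) :
    (u ^ n) (a * b) = ∑ p ∈ Finset.HasAntidiagonal.antidiagonal n,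
      (n.choose p.1) • ((u ^ p.1) a * (u ^ p.2) b) := by
  induction n with
  | zero => simp
  | succ n ih =>
    rw [Finset.sum_antidiagonal_choose_succ_nsmul (fun i j => (u ^ i) a * (u ^ j) b), pow_succ',
      Module.End.mul_apply, ih, map_sum, ← Finset.sum_add_distrib]
    refine Finset.sum_congr rfl fun p hp => ?_
    have h := Finset.HasAntidiagonal.mem_antidiagonal.1 hp
    have hc : n.choose p.2 = n.choose p.1 := by
      rw [← h]; exact Nat.choose_symm_add.symm
    rw [map_nsmul, hu, ← Module.End.mul_apply, ← Module.End.mul_apply, ← pow_succ', ← pow_succ',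
      smul_add, hc, add_comm]

lemma coeff_aux {K : Type*} [CommRing K] [Algebra ℚ K] (n : ℕ) (p : ℕ × ℕ)
    (hp : p ∈ Finset.HasAntidiagonal.antidiagonal n) :
    algebraMap ℚ K ((n.factorial : ℚ)⁻¹) * (n.choose p.1 : K) =
      algebraMap ℚ K ((p.1.factorial : ℚ)⁻¹) * algebraMap ℚ K ((p.2.factorial : ℚ)⁻¹) := by
  obtain ⟨i, j⟩ := p
  obtain rfl := Finset.HasAntidiagonal.mem_antidiagonal.1 hp
  rw [← map_natCast (algebraMap ℚ K), ← map_mul, ← map_mul]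
  congr 1
  have h := Nat.add_choose_mul_factorial_mul_factorial i j
  rw [← Nat.choose_symm_add] at h
  have h' : (((i + j).choose i : ℕ) : ℚ) * i.factorial * j.factorial = (i + j).factorial := by
    exact_mod_cast h
  have h1 : ((i + j).factorial : ℚ) ≠ 0 := by positivity
  have h2 : (i.factorial : ℚ) ≠ 0 := by positivity
  have h3 : (j.factorial : ℚ) ≠ 0 := by positivity
  simp only
  field_simp
  linarith

lemma leibniz_div_aux {K A : Type*} [CommRing K] [Algebra ℚ K] [Ring A] [Algebra K A]
    (u : Module.End K A) (hu : ∀ a b : A, u (a * b) = u a * b + a * u b) (n : ℕ) (a b : A) :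
    algebraMap ℚ K ((n.factorial : ℚ)⁻¹) • (u ^ n) (a * b) = ∑ p ∈ Finset.HasAntidiagonal.antidiagonal n,
      (algebraMap ℚ K ((p.1.factorial : ℚ)⁻¹) * algebraMap ℚ K ((p.2.factorial : ℚ)⁻¹)) •
        ((u ^ p.1) a * (u ^ p.2) b) := by
  rw [leibniz_pow_aux u hu, Finset.smul_sum]
  refine Finset.sum_congr rfl fun p hp => ?_
  rw [← coeff_aux n p hp, mul_smul, Nat.cast_smul_eq_nsmul]

/-- The common trinomial term. -/
noncomputable def triTerm {K A : Type*} [CommRing K] [Algebra ℚ K] [Ring A] [Algebra K A]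
    (u v : Module.End K A) (a b c : A) (i j s : ℕ) : A :=
  (algebraMap ℚ K ((i.factorial : ℚ)⁻¹) * algebraMap ℚ K ((j.factorial : ℚ)⁻¹) *
    algebraMap ℚ K ((s.factorial : ℚ)⁻¹)) •
      ((u ^ (i + s)) a * (u ^ j) ((v ^ s) b) * (v ^ (i + j)) c)

lemma left_aux {K A : Type*} [CommRing K] [Algebra ℚ K] [Ring A] [Algebra K A]
    (u v : Module.End K A) (hu : ∀ a b : A, u (a * b) = u a * b + a * u b)
    (r s : ℕ) (a b c : A) :
    alphaExp u v r (alphaExp u v s a b) c =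
      ∑ p ∈ Finset.HasAntidiagonal.antidiagonal r, triTerm u v a b c p.1 p.2 s := by
  unfold alphaExp triTerm
  rw [map_smul, ← smul_mul_assoc, smul_comm, leibniz_div_aux u hu, Finset.smul_sum,
    Finset.sum_mul]
  refine Finset.sum_congr rfl fun p hp => ?_
  rw [Finset.HasAntidiagonal.mem_antidiagonal.1 hp, smul_smul, smul_mul_assoc, pow_add, Module.End.mul_apply,
    mul_comm (algebraMap ℚ K ((s.factorial : ℚ)⁻¹))]

lemma right_aux {K A : Type*} [CommRing K] [Algebra ℚ K] [Ring A] [Algebra K A]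
    (u v : Module.End K A) (hv : ∀ a b : A, v (a * b) = v a * b + a * v b)
    (huv : Commute u v) (r s : ℕ) (a b c : A) :
    alphaExp u v r a (alphaExp u v s b c) =
      ∑ p ∈ Finset.HasAntidiagonal.antidiagonal r, triTerm u v a b c p.2 s p.1 := by
  unfold alphaExp triTerm
  rw [map_smul, ← mul_smul_comm, smul_comm, leibniz_div_aux v hv, Finset.smul_sum,
    Finset.mul_sum]
  refine Finset.sum_congr rfl fun p hp => ?_
  have h := (huv.pow_pow s p.1).eq
  rw [add_comm p.2 p.1, Finset.HasAntidiagonal.mem_antidiagonal.1 hp, smul_smul, mul_smul_comm, pow_add v,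
    Module.End.mul_apply, ← Module.End.mul_apply (u ^ s), h, Module.End.mul_apply, mul_assoc ((u ^ r) a)]
  congr 1
  ring

/-- for a commutative ring `K` containing the rationals and two commuting
`K`-linear derivations `u`, `v` of an associative `K`-algebra `A`, the exponential
deformation `a*b = Σ_r (h^r/r!) u^r(a)·v^r(b)` is an associative formal deformation:
all the obstructions `D_k` vanish. -/
theorem exp_deformation_associative
    {K A : Type*} [CommRing K] [Algebra ℚ K] [Ring A] [Algebra K A]
    (u v : Module.End K A)
    (hu : ∀ a b : A, u (a * b) = u a * b + a * u b)
    (hv : ∀ a b : A, v (a * b) = v a * b + a * v b)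
    (huv : ∀ a : A, u (v a) = v (u a)) :
    ∀ k, 1 ≤ k → ∀ a₁ a₂ a₃ : A,
      ∑ s ∈ Finset.range (k + 1),
        (alphaExp u v (k - s) (alphaExp u v s a₁ a₂) a₃
          - alphaExp u v (k - s) a₁ (alphaExp u v s a₂ a₃)) = 0 := by
  intro k _ a b c
  have huv' : Commute u v := LinearMap.ext huv
  rw [Finset.sum_sub_distrib, sub_eq_zero,
    ← Finset.Nat.sum_antidiagonal_eq_sum_range_succ
      (fun s r => alphaExp u v r (alphaExp u v s a b) c),
    ← Finset.Nat.sum_antidiagonal_eq_sum_range_succ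
      (fun s r => alphaExp u v r a (alphaExp u v s b c))]
  simp only [left_aux u v hu, right_aux u v hv huv']
  rw [Finset.sum_sigma', Finset.sum_sigma']
  refine Finset.sum_nbij' (fun x => ⟨(x.2.2, x.1.1 + x.2.1), (x.1.1, x.2.1)⟩)
    (fun x => ⟨(x.2.1, x.2.2 + x.1.1), (x.2.2, x.1.1)⟩) ?_ ?_ ?_ ?_ ?_
  · rintro ⟨⟨s, r⟩, ⟨i, j⟩⟩ h
    simp only [Finset.mem_sigma, Finset.HasAntidiagonal.mem_antidiagonal] at h ⊢
    obtain ⟨h1, h2⟩ := h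
    refine ⟨?_, trivial⟩
    change j + (s + i) = k
    change s + r = k at h1
    change i + j = r at h2
    omega
  · rintro ⟨⟨s, r⟩, ⟨i, j⟩⟩ h
    simp only [Finset.mem_sigma, Finset.HasAntidiagonal.mem_antidiagonal] at h ⊢
    obtain ⟨h1, h2⟩ := h
    refine ⟨?_, trivial⟩
    change i + (j + s) = k
    change s + r = k at h1
    change i + j = r at h2
    omega
  · rintro ⟨⟨s, r⟩, ⟨i, j⟩⟩ h
    simp only [Finset.mem_sigma, Finset.HasAntidiagonal.mem_antidiagonal] at h ⊢
    obtain ⟨_, rfl⟩ := h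
    rfl
  · rintro ⟨⟨s, r⟩, ⟨i, j⟩⟩ h
    simp only [Finset.mem_sigma, Finset.HasAntidiagonal.mem_antidiagonal] at h ⊢
    obtain ⟨_, rfl⟩ := h
    rfl
  · rintro ⟨⟨s, r⟩, ⟨i, j⟩⟩ h
    rfl
end

section
/- (Weyl/Moyal product.) Let K be a commutative ring containing the rationals, A a commutative associative K-algebra, d₁,…,d_N pairwise commuting K-linear derivations of A, and (ε^{αβ})_{1≤α,β≤N} an antisymmetric matrix with entries in K. Then the bilinear maps α_k(a,b) = (1/k!) Σ_{α₁,β₁,…,α_k,β_k=1}^{N} ε^{α₁β₁}···ε^{α_kβ_k} (d_{α₁}∘···∘d_{α_k})(a) · (d_{β₁}∘···∘d_{β_k})(b) (with α₀(a,b) = a·b) define an associative formal deformation of A: D_k(a₁,a₂,a₃) = Σ_{s+r=k, s,r≥0} [α_r(α_s(a₁,a₂),a₃) − α_r(a₁,α_s(a₂,a₃))] = 0 for every k ≥ 1. -/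
/-- The terms of the Weyl/Moyal deformation:
`α_k(a,b) = (1/k!) Σ ε^{α₁β₁}···ε^{α_kβ_k} (d_{α₁}∘···∘d_{α_k})(a)·(d_{β₁}∘···∘d_{β_k})(b)`. -/
noncomputable def alphaMoyal {K A : Type*} [CommRing K] [Algebra ℚ K]
    [CommRing A] [Algebra K A] {N : ℕ}
    (d : Fin N → Module.End K A) (ε : Fin N → Fin N → K) (k : ℕ) (a b : A) : A :=
  algebraMap ℚ K ((k.factorial : ℚ)⁻¹) •
    ∑ f : Fin k → Fin N, ∑ g : Fin k → Fin N,
      (∏ i : Fin k, ε (f i) (g i)) •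
        ((List.ofFn fun i => d (f i)).prod a * (List.ofFn fun i => d (g i)).prod b)

section MoyalAux
variable {K A : Type*} [CommRing K] [CommRing A] [Algebra K A] {N : ℕ}

/-- Unnormalised Moyal terms, defined recursively. -/
def moyalBeta (d : Fin N → Module.End K A) (ε : Fin N → Fin N → K) : ℕ → A → A → A
  | 0, a, b => a * b
  | k + 1, a, b => ∑ i, ∑ j, ε i j • moyalBeta d ε k (d i a) (d j b)

theorem moyalBeta_eq (d : Fin N → Module.End K A)
    (hcomm : ∀ i j, ∀ a : A, d i (d j a) = d j (d i a))
    (ε : Fin N → Fin N → K) (k : ℕ) : ∀ a b : A,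
    ∑ f : Fin k → Fin N, ∑ g : Fin k → Fin N,
      (∏ i : Fin k, ε (f i) (g i)) •
        ((List.ofFn fun i => d (f i)).prod a * (List.ofFn fun i => d (g i)).prod b)
      = moyalBeta d ε k a b := by
  have hc : ∀ (k : ℕ) (f : Fin k → Fin N) (i : Fin N) (a : A),
      d i ((List.ofFn fun i => d (f i)).prod a) = (List.ofFn fun i => d (f i)).prod (d i a) := by
    intro k
    induction k with
    | zero => intro f i a; simp
    | succ k ih =>
      intro f i a
      simp only [List.ofFn_succ, List.prod_cons, Module.End.mul_apply]
      rw [hcomm, ih (fun j => f j.succ)]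
  induction k with
  | zero => intro a b; simp [moyalBeta]
  | succ k ih =>
    intro a b
    rw [moyalBeta, ← (Fin.consEquiv (fun _ => Fin N)).sum_comp, Fintype.sum_prod_type]
    refine Finset.sum_congr rfl fun i _ => ?_
    rw [Finset.sum_comm]
    rw [← (Fin.consEquiv (fun _ => Fin N)).sum_comp, Fintype.sum_prod_type]
    refine Finset.sum_congr rfl fun j _ => ?_
    rw [← ih, Finset.sum_comm, Finset.smul_sum]
    refine Finset.sum_congr rfl fun f _ => ?_
    rw [Finset.smul_sum]
    refine Finset.sum_congr rfl fun g _ => ?_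
    simp [Fin.consEquiv, Fin.prod_univ_succ, List.ofFn_succ, hc, mul_smul]

variable (d : Fin N → Module.End K A) (ε : Fin N → Fin N → K)

theorem moyalBeta_add_left (k : ℕ) : ∀ a a' b : A,
    moyalBeta d ε k (a + a') b = moyalBeta d ε k a b + moyalBeta d ε k a' b := by
  induction k with
  | zero => intro a a' b; simp [moyalBeta, add_mul]
  | succ k ih => intro a a' b; simp [moyalBeta, ih, Finset.sum_add_distrib]

theorem moyalBeta_add_right (k : ℕ) : ∀ a b b' : A,
    moyalBeta d ε k a (b + b') = moyalBeta d ε k a b + moyalBeta d ε k a b' := by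
  induction k with
  | zero => intro a a' b; simp [moyalBeta, mul_add]
  | succ k ih => intro a a' b; simp [moyalBeta, ih, Finset.sum_add_distrib]

theorem moyalBeta_smul_left (k : ℕ) : ∀ (c : K) (a b : A),
    moyalBeta d ε k (c • a) b = c • moyalBeta d ε k a b := by
  induction k with
  | zero => intro c a b; simp [moyalBeta]
  | succ k ih => intro c a b; simp [moyalBeta, ih, Finset.smul_sum, smul_comm c]

theorem moyalBeta_smul_right (k : ℕ) : ∀ (c : K) (a b : A),
    moyalBeta d ε k a (c • b) = c • moyalBeta d ε k a b := by
  induction k with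
  | zero => intro c a b; simp [moyalBeta]
  | succ k ih => intro c a b; simp [moyalBeta, ih, Finset.smul_sum, smul_comm c]

theorem moyalBeta_der (hd : ∀ i, ∀ a b : A, d i (a * b) = d i a * b + a * d i b)
    (hcomm : ∀ i j, ∀ a : A, d i (d j a) = d j (d i a)) (k : ℕ) : ∀ (i : Fin N) (a b : A),
    d i (moyalBeta d ε k a b) = moyalBeta d ε k (d i a) b + moyalBeta d ε k a (d i b) := by
  induction k with
  | zero => intro i a b; simp [moyalBeta, hd]
  | succ k ih =>
    intro i a b
    simp [moyalBeta, ih, hcomm i, Finset.sum_add_distrib]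

/-- Operator acting on slots 1 and 2. -/
def moyalP12 : Module.End K (A → A → A → A) where
  toFun φ a b c := ∑ i, ∑ j, ε i j • φ (d i a) (d j b) c
  map_add' φ ψ := by ext a b c; simp [Finset.sum_add_distrib]
  map_smul' r φ := by ext a b c; simp [Finset.smul_sum, smul_comm r]

/-- Operator acting on slots 1 and 3. -/
def moyalP13 : Module.End K (A → A → A → A) where
  toFun φ a b c := ∑ i, ∑ j, ε i j • φ (d i a) b (d j c)
  map_add' φ ψ := by ext a b c; simp [Finset.sum_add_distrib]
  map_smul' r φ := by ext a b c; simp [Finset.smul_sum, smul_comm r]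

/-- Operator acting on slots 2 and 3. -/
def moyalP23 : Module.End K (A → A → A → A) where
  toFun φ a b c := ∑ i, ∑ j, ε i j • φ a (d i b) (d j c)
  map_add' φ ψ := by ext a b c; simp [Finset.sum_add_distrib]
  map_smul' r φ := by ext a b c; simp [Finset.smul_sum, smul_comm r]

theorem moyal_sum4 (F G : Fin N → Fin N → Fin N → Fin N → A)
    (h : ∀ i j k l, F i j k l = G k l i j) :
    ∑ i, ∑ j, ∑ k, ∑ l, F i j k l = ∑ i, ∑ j, ∑ k, ∑ l, G i j k l := by
  have e : ∀ H : Fin N → Fin N → Fin N → Fin N → A, ∑ i, ∑ j, ∑ k, ∑ l, H i j k l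
      = ∑ p : Fin N × Fin N, ∑ q : Fin N × Fin N, H p.1 p.2 q.1 q.2 := by
    intro H; simp only [Fintype.sum_prod_type]
  rw [e, e, Finset.sum_comm]
  simp only [h]

theorem moyal_comm12_13 (hcomm : ∀ i j, ∀ a : A, d i (d j a) = d j (d i a)) :
    Commute (moyalP12 d ε) (moyalP13 d ε) := by
  refine LinearMap.ext fun φ => ?_
  funext a b c
  simp only [Module.End.mul_apply, moyalP12, moyalP13, LinearMap.coe_mk, AddHom.coe_mk,
    Finset.smul_sum]
  refine moyal_sum4 _ _ fun i j k l => ?_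
  rw [smul_comm, hcomm]

theorem moyal_comm12_23 (hcomm : ∀ i j, ∀ a : A, d i (d j a) = d j (d i a)) :
    Commute (moyalP12 d ε) (moyalP23 d ε) := by
  refine LinearMap.ext fun φ => ?_
  funext a b c
  simp only [Module.End.mul_apply, moyalP12, moyalP23, LinearMap.coe_mk, AddHom.coe_mk,
    Finset.smul_sum]
  refine moyal_sum4 _ _ fun i j k l => ?_
  rw [smul_comm, hcomm]

theorem moyal_comm13_23 (hcomm : ∀ i j, ∀ a : A, d i (d j a) = d j (d i a)) :
    Commute (moyalP13 d ε) (moyalP23 d ε) := by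
  refine LinearMap.ext fun φ => ?_
  funext a b c
  simp only [Module.End.mul_apply, moyalP13, moyalP23, LinearMap.coe_mk, AddHom.coe_mk,
    Finset.smul_sum]
  refine moyal_sum4 _ _ fun i j k l => ?_
  rw [smul_comm, hcomm]

theorem moyal_left (hd : ∀ i, ∀ a b : A, d i (a * b) = d i a * b + a * d i b)
    (hcomm : ∀ i j, ∀ a : A, d i (d j a) = d j (d i a)) (r s : ℕ) :
    (fun a b c => moyalBeta d ε r (moyalBeta d ε s a b) c) =
      ((moyalP13 d ε + moyalP23 d ε) ^ r * moyalP12 d ε ^ s) (fun a b c => a * b * c) := by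
  induction r with
  | zero =>
    induction s with
    | zero => rfl
    | succ s ih =>
      rw [pow_zero, one_mul] at ih ⊢
      rw [pow_succ', Module.End.mul_apply, ← ih]
      funext a b c
      simp [moyalBeta, moyalP12, Finset.sum_mul]
  | succ r ih =>
    rw [pow_succ', mul_assoc, Module.End.mul_apply, ← ih]
    funext a b c
    simp [moyalBeta, moyalP13, moyalP23, moyalBeta_der d ε hd hcomm, moyalBeta_add_left,
      Finset.sum_add_distrib]

theorem moyal_right (hd : ∀ i, ∀ a b : A, d i (a * b) = d i a * b + a * d i b)
    (hcomm : ∀ i j, ∀ a : A, d i (d j a) = d j (d i a)) (r s : ℕ) :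
    (fun a b c => moyalBeta d ε r a (moyalBeta d ε s b c)) =
      ((moyalP12 d ε + moyalP13 d ε) ^ r * moyalP23 d ε ^ s) (fun a b c => a * b * c) := by
  induction r with
  | zero =>
    induction s with
    | zero => funext a b c; simp [moyalBeta, mul_assoc]
    | succ s ih =>
      rw [pow_zero, one_mul] at ih ⊢
      rw [pow_succ', Module.End.mul_apply, ← ih]
      funext a b c
      simp [moyalBeta, moyalP23, Finset.mul_sum]
  | succ r ih =>
    rw [pow_succ', mul_assoc, Module.End.mul_apply, ← ih]
    funext a b c
    simp [moyalBeta, moyalP12, moyalP13, moyalBeta_der d ε hd hcomm, moyalBeta_add_right,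
      Finset.sum_add_distrib]

theorem moyal_binom {M : Type*} [AddCommGroup M] [Module K M] [Algebra ℚ K]
    (X Y : Module.End K M) (h : Commute X Y) (k : ℕ) :
    ∑ s ∈ Finset.range (k + 1), (algebraMap ℚ K (((k - s).factorial : ℚ)⁻¹) *
      algebraMap ℚ K ((s.factorial : ℚ)⁻¹)) • (X ^ (k - s) * Y ^ s) =
    algebraMap ℚ K ((k.factorial : ℚ)⁻¹) • (X + Y) ^ k := by
  rw [add_comm X Y, h.symm.add_pow, Finset.smul_sum]
  refine Finset.sum_congr rfl fun s hs => ?_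
  have hs' : s ≤ k := by simpa [Nat.lt_succ_iff] using hs
  rw [(h.symm.pow_pow s (k - s)).eq, ← nsmul_eq_mul', ← Nat.cast_smul_eq_nsmul K, smul_smul]
  congr 1
  rw [← map_mul, ← map_natCast (algebraMap ℚ K), ← map_mul]
  congr 1
  rw [Nat.cast_choose ℚ hs']
  have := Nat.factorial_ne_zero k
  field_simp

end MoyalAux

/-- Weyl/Moyal product: for pairwise commuting derivations `d₁,…,d_N`
of a commutative algebra `A` and an antisymmetric matrix `(ε^{αβ})` with entries in a
ℚ-algebra `K`, the Moyal terms `α_k` define an associative formal deformation of `A`: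
all the obstructions `D_k` vanish. -/
theorem moyal_product_associative
    {K A : Type*} [CommRing K] [Algebra ℚ K] [CommRing A] [Algebra K A] {N : ℕ}
    (d : Fin N → Module.End K A)
    (hd : ∀ i, ∀ a b : A, d i (a * b) = d i a * b + a * d i b)
    (hcomm : ∀ i j, ∀ a : A, d i (d j a) = d j (d i a))
    (ε : Fin N → Fin N → K)
    (hε : ∀ i j, ε i j = - ε j i) :
    ∀ k, 1 ≤ k → ∀ a₁ a₂ a₃ : A,
      ∑ s ∈ Finset.range (k + 1),
        (alphaMoyal d ε (k - s) (alphaMoyal d ε s a₁ a₂) a₃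
          - alphaMoyal d ε (k - s) a₁ (alphaMoyal d ε s a₂ a₃)) = 0 := by
  intro k _ a₁ a₂ a₃
  have hα : ∀ k a b, alphaMoyal d ε k a b =
      algebraMap ℚ K ((k.factorial : ℚ)⁻¹) • moyalBeta d ε k a b := by
    intro k a b
    rw [alphaMoyal, moyalBeta_eq d hcomm]
  have h12_13 := moyal_comm12_13 d ε hcomm
  have h12_23 := moyal_comm12_23 d ε hcomm
  have h13_23 := moyal_comm13_23 d ε hcomm
  have e1 := moyal_binom _ _ ((h12_13.symm).add_left h12_23.symm) k
  have e2 := moyal_binom _ _ (h12_23.add_left h13_23) k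
  have e3 := e1.trans (Eq.trans (by congr 2; abel) e2.symm)
  have e4 := congrFun (congrFun (congrFun
    (LinearMap.congr_fun e3 (fun a b c : A => a * b * c)) a₁) a₂) a₃
  simp only [LinearMap.sum_apply, LinearMap.smul_apply, Finset.sum_apply, Pi.smul_apply,
    ← moyal_left d ε hd hcomm, ← moyal_right d ε hd hcomm] at e4
  rw [Finset.sum_sub_distrib, sub_eq_zero]
  simpa only [hα, moyalBeta_smul_left, moyalBeta_smul_right, smul_smul] using e4
end

section
/- The Gerstenhaber bracket on multilinear maps satisfies the graded Jacobi identity: let A be a K-module and let f : A^m → A, g : A^n → A, k : A^p → A be K-multilinear maps, with shifted degrees |f| = m−1, |g| = n−1, |k| = p−1. Then (−1)^{|f||k|}[f,[g,k]_G]_G + (−1)^{|g||f|}[g,[k,f]_G]_G + (−1)^{|k||g|}[k,[f,g]_G]_G = 0 as multilinear maps A^{m+n+p−2} → A. -/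
/-- Reindex an `a`-ary operation along an equality of arities. -/
def recast {A : Type*} {a b : ℕ} (h : a = b) (F : (Fin a → A) → A) :
    (Fin b → A) → A :=
  fun v => F (fun j => v (Fin.cast h j))

/-- The Gerstenhaber composition product of an `(m+1)`-ary and an `(n+1)`-ary
operation (shifted degrees `m` and `n`):
`(f∘g)(a₁,…,a_{m+n+1}) = Σ_i (−1)^{(i−1)·n} f(a₁,…,a_{i−1},g(a_i,…),…)`. -/
def gcomp {A : Type*} [AddCommGroup A] {m n : ℕ}
    (f : (Fin (m + 1) → A) → A) (g : (Fin (n + 1) → A) → A) :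
    (Fin (m + n + 1) → A) → A :=
  fun a => ∑ i : Fin (m + 1), (-1 : ℤ) ^ ((i : ℕ) * n) •
    f (fun j : Fin (m + 1) =>
      if (j : ℕ) < (i : ℕ) then a ⟨(j : ℕ), by have := j.isLt; omega⟩
      else if (j : ℕ) = (i : ℕ) then
        g (fun l : Fin (n + 1) =>
          a ⟨(i : ℕ) + (l : ℕ), by have hi := i.isLt; have hl := l.isLt; omega⟩)
      else a ⟨(j : ℕ) + n, by have := j.isLt; omega⟩)

/-- The Gerstenhaber bracket `[f,g]_G = f∘g − (−1)^{mn} g∘f` of operations of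
shifted degrees `m` and `n`. -/
def gbracket {A : Type*} [AddCommGroup A] {m n : ℕ}
    (f : (Fin (m + 1) → A) → A) (g : (Fin (n + 1) → A) → A) :
    (Fin (m + n + 1) → A) → A :=
  fun a => gcomp f g a
    - (-1 : ℤ) ^ (m * n) • recast (show n + m + 1 = m + n + 1 by omega) (gcomp g f) a

namespace GJ

variable {A : Type*} [AddCommGroup A]

/-- Operation on sequences attached to a finitary operation. -/
def pad {N : ℕ} (F : (Fin N → A) → A) : (ℕ → A) → A := fun a => F (fun j => a j)

/-- Insert `x` at place `i`, replacing `n+1` entries. -/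
def ins (i n : ℕ) (x : A) (a : ℕ → A) : ℕ → A :=
  fun j => if j < i then a j else if j = i then x else a (j + n)

/-- Shift of a sequence. -/
def sh (i : ℕ) (a : ℕ → A) : ℕ → A := fun j => a (i + j)

/-- Partial composition. -/
def pc (i n : ℕ) (F G : (ℕ → A) → A) : (ℕ → A) → A :=
  fun a => F (ins i n (G (sh i a)) a)

/-- Composition product on sequences. -/
def C (m n : ℕ) (F G : (ℕ → A) → A) : (ℕ → A) → A :=
  fun a => ∑ i ∈ Finset.range (m + 1), (-1 : ℤ) ^ (i * n) • pc i n F G a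

/-- Bracket on sequences. -/
def B (m n : ℕ) (F G : (ℕ → A) → A) : (ℕ → A) → A :=
  fun a => C m n F G a - (-1 : ℤ) ^ (m * n) • C n m G F a

/-- Parallel terms. -/
def D (m n p : ℕ) (F G H : (ℕ → A) → A) : (ℕ → A) → A :=
  fun a => ∑ i ∈ Finset.range (m + 1), ∑ l ∈ Finset.range i,
    (-1 : ℤ) ^ (l * p + i * n) • pc l p (pc i n F G) H a

/-- Dependence on the first `n+1` entries only. -/
def Loc (n : ℕ) (G : (ℕ → A) → A) : Prop :=
  ∀ a b : ℕ → A, (∀ j ≤ n, a j = b j) → G a = G b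

/-- Additivity in each slot. -/
def Lin (m : ℕ) (F : (ℕ → A) → A) : Prop :=
  ∀ i ≤ m, ∀ (n : ℕ) (a : ℕ → A), ∃ φ : A →+ A, ∀ x, F (ins i n x a) = φ x

theorem pad_gcomp {m n : ℕ} (f : (Fin (m + 1) → A) → A) (g : (Fin (n + 1) → A) → A) :
    pad (gcomp f g) = C m n (pad f) (pad g) := by
  funext a
  simp only [pad, gcomp, C, pc, ins, sh]
  rw [Finset.sum_range]

theorem pad_gbracket {m n : ℕ} (f : (Fin (m + 1) → A) → A) (g : (Fin (n + 1) → A) → A) :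
    pad (gbracket f g) = B m n (pad f) (pad g) := by
  funext a
  simp only [B, ← pad_gcomp]
  rfl

theorem loc_pad {n : ℕ} (g : (Fin (n + 1) → A) → A) : Loc n (pad g) := by
  intro a b h
  unfold pad
  congr 1
  funext j
  exact h j (by omega)

theorem lin_pad {K : Type*} [CommRing K] [Module K A] {m : ℕ}
    (f : MultilinearMap K (fun _ : Fin (m + 1) => A) A) : Lin m (pad ⇑f) := by
  intro i hi n a
  refine ⟨(f.toLinearMap (fun j => ins i n 0 a j) ⟨i, by omega⟩).toAddMonoidHom, fun x => ?_⟩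
  simp only [pad, LinearMap.toAddMonoidHom_coe, MultilinearMap.toLinearMap_apply]
  congr 1
  funext j
  by_cases h : j = ⟨i, by omega⟩
  · subst h; simp [ins]
  · have h' : (j : ℕ) ≠ i := fun e => h (Fin.ext e)
    simp [Function.update_of_ne h, ins, h']

theorem seq (i j n p : ℕ) (hj : j ≤ n) (F G H : (ℕ → A) → A) :
    pc (i + j) p (pc i n F G) H = pc i (n + p) F (pc j p G H) := by
  funext a
  unfold pc
  have e1 : sh i (ins (i + j) p (H (sh (i + j) a)) a)
      = ins j p (H (sh j (sh i a))) (sh i a) := by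
    have : sh j (sh i a) = sh (i + j) a := by funext l; simp [sh, add_assoc]
    rw [this]
    funext l
    simp only [sh, ins]
    split_ifs <;> first | rfl | omega | (congr 1; omega)
  rw [e1]
  congr 1
  funext l
  simp only [ins]
  split_ifs <;> first | rfl | omega | (congr 1; omega)

theorem par (i t n p : ℕ) (F G H : (ℕ → A) → A) (hG : Loc n G) :
    pc (i + (n + 1) + t) p (pc i n F G) H = pc i n (pc (i + 1 + t) p F H) G := by
  funext a
  unfold pc
  have e1 : G (sh i (ins (i + (n + 1) + t) p (H (sh (i + (n + 1) + t) a)) a)) = G (sh i a) := by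
    apply hG
    intro j hj
    simp only [sh, ins]
    split_ifs <;> first | rfl | omega
  have e2 : sh (i + 1 + t) (ins i n (G (sh i a)) a) = sh (i + (n + 1) + t) a := by
    funext l
    simp only [sh, ins]
    split_ifs <;> first | rfl | omega | (congr 1; omega)
  rw [e1, e2]
  congr 1
  funext l
  simp only [ins]
  split_ifs <;> first | rfl | omega | (congr 1; omega)

theorem flip (m : ℕ) (ψ : ℕ → ℕ → A) :
    ∑ i ∈ Finset.range (m + 1), ∑ l ∈ Finset.range i, ψ i l
      = ∑ i ∈ Finset.range (m + 1), ∑ t ∈ Finset.range (m - i), ψ (i + 1 + t) i := by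
  induction m with
  | zero => simp
  | succ m ih =>
    rw [Finset.sum_range_succ, ih, Finset.sum_range_succ _ (m + 1), ← Finset.sum_add_distrib]
    simp only [Nat.sub_self, Finset.range_zero, Finset.sum_empty, add_zero]
    apply Finset.sum_congr rfl
    intro i hi
    have hi : i < m + 1 := Finset.mem_range.mp hi
    rw [show m + 1 - i = (m - i) + 1 by omega, Finset.sum_range_succ,
      show i + 1 + (m - i) = m + 1 by omega]

theorem C_apply (m n : ℕ) (F G : (ℕ → A) → A) (a : ℕ → A) :
    C m n F G a = ∑ i ∈ Finset.range (m + 1), (-1 : ℤ) ^ (i * n) • pc i n F G a := rfl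

theorem pc_C (m n p i : ℕ) (hi : i ≤ m) (F G H : (ℕ → A) → A) (hF : Lin m F) (a : ℕ → A) :
    pc i (n + p) F (C n p G H) a = ∑ j ∈ Finset.range (n + 1),
      (-1 : ℤ) ^ (j * p) • pc i (n + p) F (pc j p G H) a := by
  obtain ⟨φ, hφ⟩ := hF i hi (n + p) a
  simp only [pc, C, hφ, map_sum, map_zsmul]

theorem C_left (m n p : ℕ) (F G H : (ℕ → A) → A) (a : ℕ → A) :
    C (m + n) p (C m n F G) H a = ∑ i ∈ Finset.range (m + 1), ∑ l ∈ Finset.range (m + n + 1),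
      (-1 : ℤ) ^ (l * p + i * n) • pc l p (pc i n F G) H a := by
  rw [Finset.sum_comm]
  simp only [C, pc, Finset.smul_sum, smul_smul, pow_add]

theorem assoc (m n p : ℕ) (F G H : (ℕ → A) → A) (hF : Lin m F) (hG : Loc n G) (a : ℕ → A) :
    C (m + n) p (C m n F G) H a = C m (n + p) F (C n p G H) a + D m n p F G H a
      + (-1 : ℤ) ^ (n * p) • D m p n F H G a := by
  rw [C_left, C_apply m (n + p)]
  unfold D
  rw [flip m (fun i l => (-1 : ℤ) ^ (l * n + i * p) • pc l n (pc i p F H) G a),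
    Finset.smul_sum, ← Finset.sum_add_distrib, ← Finset.sum_add_distrib]
  apply Finset.sum_congr rfl
  intro i hi
  have hi : i < m + 1 := Finset.mem_range.mp hi
  rw [show m + n + 1 = i + (n + 1) + (m - i) by omega, Finset.sum_range_add,
    Finset.sum_range_add, pc_C m n p i (by omega) F G H hF, Finset.smul_sum, Finset.smul_sum,
    add_comm (∑ x ∈ Finset.range i, _)]
  congr 1
  · congr 1
    apply Finset.sum_congr rfl
    intro j hj
    have hj : j < n + 1 := Finset.mem_range.mp hj
    rw [seq i j n p (by omega), smul_smul, ← pow_add]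
    congr 2
    ring
  · apply Finset.sum_congr rfl
    intro t _
    rw [par i t n p F G H hG, smul_smul, ← pow_add]
    congr 2
    ring

theorem C_B (m n p : ℕ) (F G H : (ℕ → A) → A) (hF : Lin m F) (a : ℕ → A) :
    C m (n + p) F (B n p G H) a = C m (n + p) F (C n p G H) a
      - (-1 : ℤ) ^ (n * p) • C m (n + p) F (C p n H G) a := by
  simp only [C_apply m (n + p)]
  rw [Finset.smul_sum, ← Finset.sum_sub_distrib]
  apply Finset.sum_congr rfl
  intro i hi
  have hi : i < m + 1 := Finset.mem_range.mp hi
  obtain ⟨φ, hφ⟩ := hF i (by omega) (n + p) a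
  simp only [pc, B, hφ, map_sub, map_zsmul, smul_sub]
  rw [smul_comm]

theorem B_C (N m n p : ℕ) (F G H : (ℕ → A) → A) (a : ℕ → A) :
    C N m (B n p G H) F a = C N m (C n p G H) F a
      - (-1 : ℤ) ^ (n * p) • C N m (C p n H G) F a := by
  simp only [C_apply N m]
  rw [Finset.smul_sum, ← Finset.sum_sub_distrib]
  apply Finset.sum_congr rfl
  intro i hi
  simp only [pc, B, smul_sub]
  rw [smul_comm]

theorem BB (m n p : ℕ) (F G H : (ℕ → A) → A) (hF : Lin m F) (hG : Lin n G) (hH : Lin p H)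
    (lG : Loc n G) (lH : Loc p H) (a : ℕ → A) :
    B m (n + p) F (B n p G H) a =
      C m (n + p) F (C n p G H) a - (-1 : ℤ) ^ (n * p) • C m (n + p) F (C p n H G) a
      - ((-1 : ℤ) ^ (m * n) * (-1 : ℤ) ^ (p * m)) •
        ((C n (p + m) G (C p m H F) a + D n p m G H F a + (-1 : ℤ) ^ (p * m) • D n m p G F H a)
        - (-1 : ℤ) ^ (n * p) • (C p (m + n) H (C n m G F) a + D p n m H G F a
          + (-1 : ℤ) ^ (m * n) • D p m n H F G a)) := by
  have h2 := assoc p n m H G F hH lG a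
  rw [add_comm p n, add_comm n m, mul_comm n m] at h2
  rw [B, C_B m n p F G H hF, B_C, assoc n p m G H F hG lH, h2, mul_add, pow_add, mul_comm m p]

theorem jac (m n p : ℕ) (F G H : (ℕ → A) → A) (hF : Lin m F) (hG : Lin n G) (hH : Lin p H)
    (lF : Loc m F) (lG : Loc n G) (lH : Loc p H) (a : ℕ → A) :
    (-1 : ℤ) ^ (m * p) • B m (n + p) F (B n p G H) a
      + (-1 : ℤ) ^ (n * m) • B n (p + m) G (B p m H F) a
      + (-1 : ℤ) ^ (p * n) • B p (m + n) H (B m n F G) a = 0 := by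
  rw [BB m n p F G H hF hG hH lG lH, BB n p m G H F hG hH hF lH lF,
    BB p m n H F G hH hF hG lF lG]
  rw [mul_comm m p, mul_comm n m, mul_comm p n]
  rcases neg_one_pow_eq_or ℤ (p * m) with h1 | h1 <;>
  rcases neg_one_pow_eq_or ℤ (m * n) with h2 | h2 <;>
  rcases neg_one_pow_eq_or ℤ (n * p) with h3 | h3 <;>
  rw [h1, h2, h3] <;> module

end GJ

/-- the Gerstenhaber bracket on multilinear maps satisfies the graded
Jacobi identity.  Here `f`, `g`, `k` are `K`-multilinear maps with `m+1`, `n+1`, `p+1`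
arguments, i.e. of shifted degrees `|f| = m`, `|g| = n`, `|k| = p`, and
`(−1)^{|f||k|}[f,[g,k]] + (−1)^{|g||f|}[g,[k,f]] + (−1)^{|k||g|}[k,[f,g]] = 0`. -/
theorem gerstenhaber_graded_jacobi
    {K A : Type*} [CommRing K] [AddCommGroup A] [Module K A]
    (m n p : ℕ)
    (f : MultilinearMap K (fun _ : Fin (m + 1) => A) A)
    (g : MultilinearMap K (fun _ : Fin (n + 1) => A) A)
    (k : MultilinearMap K (fun _ : Fin (p + 1) => A) A) :
    ∀ v : Fin (m + n + p + 1) → A,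
      (-1 : ℤ) ^ (m * p) •
          recast (show m + (n + p) + 1 = m + n + p + 1 by omega)
            (gbracket ⇑f (gbracket ⇑g ⇑k)) v
        + (-1 : ℤ) ^ (n * m) •
            recast (show n + (p + m) + 1 = m + n + p + 1 by omega)
              (gbracket ⇑g (gbracket ⇑k ⇑f)) v
        + (-1 : ℤ) ^ (p * n) •
            recast (show p + (m + n) + 1 = m + n + p + 1 by omega)
              (gbracket ⇑k (gbracket ⇑f ⇑g)) v = 0 := by
  intro v
  have key := GJ.jac m n p (GJ.pad f) (GJ.pad g) (GJ.pad k) (GJ.lin_pad f) (GJ.lin_pad g)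
    (GJ.lin_pad k) (GJ.loc_pad f) (GJ.loc_pad g) (GJ.loc_pad k)
    (fun j => if h : j < m + n + p + 1 then v ⟨j, h⟩ else 0)
  simp only [← GJ.pad_gbracket] at key
  have e : ∀ (N : ℕ) (h : N = m + n + p + 1) (F : (Fin N → A) → A),
      GJ.pad F (fun j => if h : j < m + n + p + 1 then v ⟨j, h⟩ else 0) = recast h F v := by
    intro N h F
    subst h
    unfold GJ.pad recast
    congr 1
    funext j
    exact dif_pos j.isLt
  rw [e _ (by omega), e _ (by omega), e _ (by omega)] at key
  exact key
end

section
/- The Hochschild differential interacts with the composition product by the Gerstenhaber identity: let A be an associative K-algebra and f : A^m → A, g : A^n → A K-multilinear maps. Then δ(f∘g) = (−1)^{n−1} δf∘g + f∘δg + (−1)^n (g⌣f − (−1)^{mn} f⌣g) as multilinear maps A^{m+n} → A. -/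
/-- The cup product of an `(m+1)`-ary and an `(n+1)`-ary operation:
`(f⌣g)(a₁,…,a_{m+n+2}) = f(a₁,…,a_{m+1})·g(a_{m+2},…,a_{m+n+2})`. -/
def cup {A : Type*} [Ring A] {m n : ℕ}
    (f : (Fin (m + 1) → A) → A) (g : (Fin (n + 1) → A) → A) :
    (Fin (m + n + 2) → A) → A :=
  fun a => f (fun i => a ⟨(i : ℕ), by have := i.isLt; omega⟩)
    * g (fun i => a ⟨m + 1 + (i : ℕ), by have := i.isLt; omega⟩)

/-- The Hochschild coboundary of an `(r+1)`-ary operation. -/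
def hdel {A : Type*} [Ring A] {r : ℕ} (f : (Fin (r + 1) → A) → A) :
    (Fin (r + 2) → A) → A :=
  fun a => a 0 * f (fun i => a i.succ)
    + ∑ j : Fin (r + 1), (-1 : ℤ) ^ ((j : ℕ) + 1) •
        f (fun i : Fin (r + 1) =>
          if (i : ℕ) < (j : ℕ) then a i.castSucc
          else if (i : ℕ) = (j : ℕ) then a i.castSucc * a i.succ
          else a i.succ)
    + (-1 : ℤ) ^ (r + 2) • (f (fun i => a i.castSucc) * a (Fin.last (r + 1)))

namespace GerstAux

/-- Insertion of a value `x` at position `i`, skipping `n` further entries. -/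
def ins {A : Type*} (i n : ℕ) (x : A) (u : ℕ → A) : ℕ → A :=
  fun j => if j < i then u j else if j = i then x else u (j + n)

/-- Multiplication of entries `j` and `j+1`. -/
def mu {A : Type*} [Mul A] (j : ℕ) (u : ℕ → A) : ℕ → A :=
  fun i => if i < j then u i else if i = j then u i * u (i + 1) else u (i + 1)

/-- Evaluate on the first entries of a sequence. -/
def ev {A : Type*} {m : ℕ} (f : (Fin m → A) → A) (u : ℕ → A) : A := f (fun i => u i)

theorem ev_congr {A : Type*} {m : ℕ} (f : (Fin m → A) → A) {u v : ℕ → A}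
    (h : ∀ i < m, u i = v i) : ev f u = ev f v := by
  unfold ev
  congr 1
  funext i
  exact h i i.isLt

theorem gcomp_eq {A : Type*} [AddCommGroup A] {m n : ℕ}
    (f : (Fin (m + 1) → A) → A) (g : (Fin (n + 1) → A) → A) (u : ℕ → A) :
    ev (gcomp f g) u = ∑ i ∈ Finset.range (m + 1), (-1 : ℤ) ^ (i * n) •
      ev f (ins i n (ev g (fun l => u (i + l))) u) := by
  rw [Finset.sum_range]
  rfl

theorem hdel_eq {A : Type*} [Ring A] {r : ℕ} (f : (Fin (r + 1) → A) → A) (u : ℕ → A) :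
    ev (hdel f) u = u 0 * ev f (fun i => u (i + 1))
      + ∑ j ∈ Finset.range (r + 1), (-1 : ℤ) ^ (j + 1) • ev f (mu j u)
      + (-1 : ℤ) ^ r • (ev f u * u (r + 1)) := by
  rw [Finset.sum_range, show (-1 : ℤ) ^ r = (-1) ^ (r + 2) by rw [pow_add]; norm_num]
  rfl

theorem double_sum {A : Type*} [AddCommGroup A] (m : ℕ) (T : ℕ → ℕ → A) :
    ∑ i ∈ Finset.range (m + 2), ∑ j ∈ Finset.range (m + 1), T i j
      = ∑ i ∈ Finset.range (m + 1),
        ((∑ j ∈ Finset.range (m + 1), if j ≤ i then T (i + 1) j else 0)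
          + ∑ j ∈ Finset.range (m + 1), if i ≤ j then T i j else 0) := by
  rw [Finset.sum_add_distrib, Finset.sum_comm,
    Finset.sum_comm (s := Finset.range (m + 1)) (t := Finset.range (m + 1))
      (f := fun i j => if j ≤ i then T (i + 1) j else 0),
    Finset.sum_comm (s := Finset.range (m + 1)) (t := Finset.range (m + 1))
      (f := fun i j => if i ≤ j then T i j else 0), ← Finset.sum_add_distrib]
  refine Finset.sum_congr rfl fun j hj => ?_
  have hj' := Finset.mem_range.1 hj
  have h1 : ∑ i ∈ Finset.range (m + 2), T i j
      = (∑ i ∈ Finset.range (m + 2), if j < i then T i j else 0)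
        + ∑ i ∈ Finset.range (m + 2), if i ≤ j then T i j else 0 := by
    rw [← Finset.sum_add_distrib]
    refine Finset.sum_congr rfl fun i _ => ?_
    by_cases h : j < i
    · simp [h, not_le.2 h]
    · simp [h, not_lt.1 h]
  rw [h1, Finset.sum_range_succ', Finset.sum_range_succ _ (m + 1)]
  have h2 : ¬ (m + 1 ≤ j) := by omega
  simp [h2]

theorem split_sums {A : Type*} [AddCommGroup A] (i d : ℕ) (P Q : ℕ → A) :
    ((∑ j ∈ Finset.range (i + d + 1), if j ≤ i then P j else 0)
          + ∑ j ∈ Finset.range (i + d + 1), if i ≤ j then Q j else 0)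
      = ∑ j ∈ Finset.range i, P j + P i + (Q i + ∑ k ∈ Finset.range d, Q (i + 1 + k)) := by
  have e : i + d + 1 = i + 1 + d := by omega
  rw [e, Finset.sum_range_add, Finset.sum_range_add _ (i + 1) d, Finset.sum_range_succ,
    Finset.sum_range_succ _ i]
  have a1 : ∀ x ∈ Finset.range i, (if x ≤ i then P x else 0) = P x := fun x hx => by
    have := Finset.mem_range.1 hx
    rw [if_pos (by omega)]
  have a2 : ∀ x ∈ Finset.range i, (if i ≤ x then Q x else 0) = 0 := fun x hx => by
    have := Finset.mem_range.1 hx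
    rw [if_neg (by omega)]
  have a3 : ∀ x ∈ Finset.range d, (if i + 1 + x ≤ i then P (i + 1 + x) else 0) = 0 :=
    fun x _ => by rw [if_neg (by omega)]
  have a4 : ∀ x ∈ Finset.range d,
      (if i ≤ i + 1 + x then Q (i + 1 + x) else 0) = Q (i + 1 + x) :=
    fun x _ => by rw [if_pos (by omega)]
  rw [Finset.sum_congr rfl a1, Finset.sum_congr rfl a2, Finset.sum_congr rfl a3,
    Finset.sum_congr rfl a4]
  simp [add_assoc]

/-- The middle terms for a fixed insertion position `i`. -/
theorem middle {K A : Type*} [CommRing K] [Ring A] [Algebra K A] (i d n : ℕ)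
    (f : MultilinearMap K (fun _ : Fin (i + d + 1) => A) A)
    (g : (Fin (n + 1) → A) → A) (u : ℕ → A) (T : ℕ → ℕ → A)
    (hT : ∀ i j, T i j = (-1 : ℤ) ^ (n + i * n + (j + 1)) •
      ev f (mu j (ins i n (ev g (fun l => u (i + l))) u))) :
    ∑ j ∈ Finset.range (i + d + n + 1), (-1 : ℤ) ^ (j + 1 + i * n) •
        ev f (ins i n (ev g (fun l => mu j u (i + l))) (mu j u))
      = ∑ j ∈ Finset.range i, T (i + 1) j + T (i + 1) i
        + (T i i + ∑ k ∈ Finset.range d, T i (i + 1 + k))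
        + (-1 : ℤ) ^ (i * (n + 1)) •
          ev f (ins i (n + 1) (ev (hdel g) (fun l => u (i + l))) u) := by
  have hi : i < i + d + 1 := by omega
  let φ : A →ₗ[K] A := f.toLinearMap
    (fun j => if (j : ℕ) < i then u j else u (j + (n + 1))) ⟨i, hi⟩
  have hφ : ∀ (x : A) (z : ℕ → A), z i = x → (∀ j, j < i → z j = u j) →
      (∀ j, i < j → z j = u (j + (n + 1))) → ev f z = φ x := by
    intro x z h1 h2 h3
    change f _ = f (Function.update _ _ _)
    congr 1
    funext j
    by_cases hj : j = ⟨i, hi⟩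
    · subst hj
      simp [h1]
    · have hj' : (j : ℕ) ≠ i := fun h => hj (Fin.ext h)
      rw [Function.update_of_ne hj]
      by_cases h : (j : ℕ) < i
      · simp [h, h2]
      · rw [if_neg h, h3 _ (by omega)]
  have s : ∀ a b : ℕ, (a + b) % 2 = 0 → (-1 : ℤ) ^ a = (-1) ^ b := by
    intro a b h
    exact neg_one_pow_congr (by rw [Nat.even_iff, Nat.even_iff]; omega)
  -- the part from `δ g`
  have hR : ev f (ins i (n + 1) (ev (hdel g) (fun l => u (i + l))) u)
      = φ (u i * ev g (fun l => u (i + 1 + l)))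
        + ∑ l ∈ Finset.range (n + 1), (-1 : ℤ) ^ (l + 1) •
            φ (ev g (mu l (fun l => u (i + l))))
        + (-1 : ℤ) ^ n • φ (ev g (fun l => u (i + l)) * u (i + (n + 1))) := by
    rw [hφ (ev (hdel g) (fun l => u (i + l))), hdel_eq, map_add, map_add, map_sum, map_zsmul]
    · simp only [map_zsmul]
      have e : (fun l => u (i + (l + 1))) = (fun l => u (i + 1 + l)) := by
        funext l
        congr 1
        omega
      rw [e, Nat.add_zero]
    · simp [ins]
    · intro j hj
      simp [ins, hj]
    · intro j hj
      simp [ins, not_lt.2 hj.le, hj.ne']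
  have hT1 : T (i + 1) i = - ((-1 : ℤ) ^ (i * (n + 1)) •
      φ (u i * ev g (fun l => u (i + 1 + l)))) := by
    rw [hT, hφ (u i * ev g (fun l => u (i + 1 + l)))]
    · rw [← neg_smul, ← neg_one_mul ((-1 : ℤ) ^ (i * (n + 1))), ← pow_succ']
      congr 1
      apply s
      ring_nf
      omega
    · simp [mu, ins]
    · intro j hj
      simp only [mu, ins]
      grind
    · intro j hj
      simp only [mu, ins]
      rw [if_neg (by omega), if_neg (by omega), if_neg (by omega), if_neg (by omega)]
      congr 1
      omega
  have hT2 : T i i = - ((-1 : ℤ) ^ (i * (n + 1)) • (-1 : ℤ) ^ n •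
      φ (ev g (fun l => u (i + l)) * u (i + (n + 1)))) := by
    rw [hT, hφ (ev g (fun l => u (i + l)) * u (i + (n + 1)))]
    · rw [← neg_smul, smul_smul, ← neg_one_mul ((-1 : ℤ) ^ (i * (n + 1))), ← pow_succ', ← pow_add]
      congr 1
      apply s
      ring_nf
      omega
    · simp only [mu, ins]
      rw [if_neg (by omega), if_pos trivial, if_neg (by omega), if_pos trivial,
        if_neg (by omega), if_neg (by omega)]
      congr 2
      omega
    · intro j hj
      simp [mu, ins, hj]
    · intro j hj
      simp only [mu, ins]
      rw [if_neg (by omega), if_neg (by omega), if_neg (by omega), if_neg (by omega)]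
      congr 1
      omega
  rw [hR, hT1, hT2, show i + d + n + 1 = i + (n + 1) + d by omega, Finset.sum_range_add,
    Finset.sum_range_add]
  have c1 : ∀ j ∈ Finset.range i, (-1 : ℤ) ^ (j + 1 + i * n) •
        ev f (ins i n (ev g (fun l => mu j u (i + l))) (mu j u)) = T (i + 1) j := by
    intro j hj
    have hj := Finset.mem_range.1 hj
    rw [hT]
    congr 1
    · apply s
      ring_nf
      omega
    · apply ev_congr
      intro k _
      have : ev g (fun l => mu j u (i + l)) = ev g (fun l => u (i + 1 + l)) := by
        apply ev_congr
        intro l _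
        simp only [mu]
        rw [if_neg (by omega), if_neg (by omega)]
        congr 1
        omega
      rw [this]
      simp only [mu, ins]
      grind
  have c2 : ∀ l ∈ Finset.range (n + 1), (-1 : ℤ) ^ (i + l + 1 + i * n) •
        ev f (ins i n (ev g (fun l' => mu (i + l) u (i + l'))) (mu (i + l) u))
        = (-1 : ℤ) ^ (i * (n + 1)) • (-1 : ℤ) ^ (l + 1) •
            φ (ev g (mu l (fun l => u (i + l)))) := by
    intro l hl
    have hl := Finset.mem_range.1 hl
    rw [smul_smul, ← pow_add, hφ (ev g (mu l (fun l => u (i + l))))]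
    · congr 1
      apply s
      ring_nf
      omega
    · simp only [ins]
      rw [if_neg (by omega), if_pos trivial]
      apply ev_congr
      intro k _
      simp only [mu]
      grind
    · intro j hj
      simp only [mu, ins]
      grind
    · intro j hj
      simp only [mu, ins]
      grind
  have c3 : ∀ k ∈ Finset.range d, (-1 : ℤ) ^ (i + (n + 1) + k + 1 + i * n) •
        ev f (ins i n (ev g (fun l => mu (i + (n + 1) + k) u (i + l))) (mu (i + (n + 1) + k) u))
        = T i (i + 1 + k) := by
    intro k hk
    rw [hT]
    congr 1
    · apply s
      ring_nf
      omega
    · apply ev_congr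
      intro j _
      have : ev g (fun l => mu (i + (n + 1) + k) u (i + l)) = ev g (fun l => u (i + l)) := by
        apply ev_congr
        intro l hl
        simp only [mu]
        rw [if_pos (by omega)]
      rw [this]
      simp only [mu, ins]
      grind
  rw [Finset.sum_congr rfl c1, Finset.sum_congr rfl c2, Finset.sum_congr rfl c3,
    ← Finset.smul_sum]
  simp only [smul_add]
  abel

theorem main {K A : Type*} [CommRing K] [Ring A] [Algebra K A]
    (m n : ℕ)
    (f : MultilinearMap K (fun _ : Fin (m + 1) => A) A)
    (g : MultilinearMap K (fun _ : Fin (n + 1) => A) A) (u : ℕ → A) :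
    ev (hdel (gcomp f g)) u
      = (-1 : ℤ) ^ n • ev (gcomp (hdel f) g) u + ev (gcomp f (hdel g)) u
        + (-1 : ℤ) ^ (n + 1) • (ev g u * ev f (fun i => u (n + 1 + i))
          - (-1 : ℤ) ^ ((m + 1) * (n + 1)) • (ev f u * ev g (fun i => u (m + 1 + i)))) := by
  have s : ∀ a b : ℕ, (a + b) % 2 = 0 → (-1 : ℤ) ^ a = (-1) ^ b := by
    intro a b h
    exact neg_one_pow_congr (by rw [Nat.even_iff, Nat.even_iff]; omega)
  rw [hdel_eq]
  simp only [gcomp_eq]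
  simp only [hdel_eq f]
  let T : ℕ → ℕ → A := fun i j => (-1 : ℤ) ^ (n + i * n + (j + 1)) •
      ev f (mu j (ins i n (ev g (fun l => u (i + l))) u))
  -- first terms
  have hA : (-1 : ℤ) ^ n • ∑ i ∈ Finset.range (m + 2), (-1 : ℤ) ^ (i * n) •
      (ins i n (ev g (fun l => u (i + l))) u 0 *
        ev f (fun k => ins i n (ev g (fun l => u (i + l))) u (k + 1)))
      = u 0 * (∑ i ∈ Finset.range (m + 1), (-1 : ℤ) ^ (i * n) •
          ev f (ins i n (ev g (fun l => u (i + l + 1))) (fun k => u (k + 1))))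
        + (-1 : ℤ) ^ n • (ev g u * ev f (fun i => u (n + 1 + i))) := by
    rw [Finset.sum_range_succ', smul_add, Finset.smul_sum, Finset.mul_sum]
    congr 1
    · refine Finset.sum_congr rfl fun i _ => ?_
      rw [mul_smul_comm, smul_smul, ← pow_add]
      congr 1
      · apply s
        ring_nf
        omega
      · have e : (fun l => u (i + 1 + l)) = (fun l => u (i + l + 1)) := by
          funext l
          congr 1
          omega
        rw [e]
        congr 1
        apply ev_congr
        intro k _
        simp only [ins]
        grind
    · simp only [Nat.zero_mul, pow_zero, one_smul]
      congr 2
      · simp [ins]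
      · apply ev_congr
        intro k _
        simp only [ins]
        grind
  have hC : (-1 : ℤ) ^ n • ∑ i ∈ Finset.range (m + 2), (-1 : ℤ) ^ (i * n) • (-1 : ℤ) ^ m •
      (ev f (ins i n (ev g (fun l => u (i + l))) u) *
        ins i n (ev g (fun l => u (i + l))) u (m + 1))
      = (-1 : ℤ) ^ (m + n) • ((∑ i ∈ Finset.range (m + 1), (-1 : ℤ) ^ (i * n) •
          ev f (ins i n (ev g (fun l => u (i + l))) u)) * u (m + n + 1))
        + (-1 : ℤ) ^ (n + 1) • (-1 : ℤ) ^ ((m + 1) * (n + 1)) •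
          (ev f u * ev g (fun i => u (m + 1 + i))) := by
    rw [Finset.sum_range_succ, smul_add, Finset.smul_sum, Finset.sum_mul, Finset.smul_sum]
    congr 1
    · refine Finset.sum_congr rfl fun i hi => ?_
      have hi := Finset.mem_range.1 hi
      rw [smul_mul_assoc, smul_smul, smul_smul, smul_smul, ← pow_add, ← pow_add, ← pow_add]
      congr 1
      · apply s
        ring_nf
        omega
      · congr 1
        simp only [ins]
        rw [if_neg (by omega), if_neg (by omega)]
        congr 1
        omega
    · rw [smul_smul, smul_smul, smul_smul, ← pow_add, ← pow_add, ← pow_add]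
      congr 1
      · apply s
        ring_nf
        omega
      · congr 1
        · apply ev_congr
          intro k hk
          simp [ins, hk]
        · simp [ins]
  have hB : (-1 : ℤ) ^ n • ∑ i ∈ Finset.range (m + 2), (-1 : ℤ) ^ (i * n) •
      ∑ j ∈ Finset.range (m + 1), (-1 : ℤ) ^ (j + 1) •
        ev f (mu j (ins i n (ev g (fun l => u (i + l))) u))
      + ∑ i ∈ Finset.range (m + 1), (-1 : ℤ) ^ (i * (n + 1)) •
          ev f (ins i (n + 1) (ev (hdel g) (fun l => u (i + l))) u)
      = ∑ j ∈ Finset.range (m + n + 1), (-1 : ℤ) ^ (j + 1) •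
        ∑ i ∈ Finset.range (m + 1), (-1 : ℤ) ^ (i * n) •
        ev f (ins i n (ev g (fun l => mu j u (i + l))) (mu j u)) := by
    have e1 : (-1 : ℤ) ^ n • ∑ i ∈ Finset.range (m + 2), (-1 : ℤ) ^ (i * n) •
      ∑ j ∈ Finset.range (m + 1), (-1 : ℤ) ^ (j + 1) •
        ev f (mu j (ins i n (ev g (fun l => u (i + l))) u))
        = ∑ i ∈ Finset.range (m + 2), ∑ j ∈ Finset.range (m + 1), T i j := by
      simp only [Finset.smul_sum, smul_smul, ← pow_add, T, ← add_assoc]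
    rw [e1, double_sum, ← Finset.sum_add_distrib]
    simp only [Finset.smul_sum, smul_smul, ← pow_add]
    rw [Finset.sum_comm]
    refine Finset.sum_congr rfl fun i hi => ?_
    have hi := Finset.mem_range.1 hi
    obtain ⟨d, rfl⟩ : ∃ d, m = i + d := ⟨m - i, by omega⟩
    rw [split_sums i d (T (i + 1)) (T i)]
    exact (middle i d n f g u T (fun _ _ => rfl)).symm
  simp only [smul_add, Finset.sum_add_distrib, smul_sub] at hA hB hC ⊢
  rw [hA, hC, ← hB, pow_succ (-1 : ℤ) n]
  simp only [mul_neg, mul_one, neg_smul]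
  abel

end GerstAux

/-- the Gerstenhaber identity
`δ(f∘g) = (−1)^{n−1} δf∘g + f∘δg + (−1)^n (g⌣f − (−1)^{mn} f⌣g)` for `K`-multilinear
maps `f`, `g` with `m+1` resp. `n+1` arguments (so the sign exponents `n−1`, `n` and
`mn` of the natural-language statement become `n`, `n+1` and `(m+1)(n+1)`). -/
theorem hochschild_differential_of_comp_product
    {K A : Type*} [CommRing K] [Ring A] [Algebra K A]
    (m n : ℕ)
    (f : MultilinearMap K (fun _ : Fin (m + 1) => A) A)
    (g : MultilinearMap K (fun _ : Fin (n + 1) => A) A) :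
    ∀ v : Fin (m + n + 2) → A,
      hdel (gcomp ⇑f ⇑g) v
        = (-1 : ℤ) ^ n •
            recast (show m + 1 + n + 1 = m + n + 2 by omega) (gcomp (hdel ⇑f) ⇑g) v
          + recast (show m + (n + 1) + 1 = m + n + 2 by omega) (gcomp ⇑f (hdel ⇑g)) v
          + (-1 : ℤ) ^ (n + 1) •
              (recast (show n + m + 2 = m + n + 2 by omega) (cup ⇑g ⇑f) v
                - (-1 : ℤ) ^ ((m + 1) * (n + 1)) • cup ⇑f ⇑g v) := by
  intro v
  obtain ⟨u, rfl⟩ : ∃ u : ℕ → A, v = fun i : Fin (m + n + 2) => u (i : ℕ) :=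
    ⟨fun k => if h : k < m + n + 2 then v ⟨k, h⟩ else 0, by
      funext i
      simp⟩
  exact GerstAux.main m n f g u
end

section
/- The cup product of Hochschild cocycles is graded commutative up to a coboundary: let A be an associative K-algebra and f : A^m → A, g : A^n → A K-multilinear Hochschild cocycles (δf = 0 and δg = 0). Then g⌣f − (−1)^{mn} f⌣g = (−1)^n δ(f∘g); in particular f⌣g − (−1)^{mn} g⌣f is a Hochschild coboundary, so that the induced cup product on Hochschild cohomology is graded commutative. -/
namespace HochAux

/-- Shift of a sequence. -/
def sh {A : Type*} (k : ℕ) (w : ℕ → A) : ℕ → A := fun i => w (k + i)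

/-- Contract the entries `j` and `j+1` of a sequence. -/
def ml {A : Type*} [Ring A] (j : ℕ) (w : ℕ → A) : ℕ → A :=
  fun i => if i < j then w i else if i = j then w i * w (i + 1) else w (i + 1)

/-- Replace `n+1` entries starting from `i` by the single entry `x`. -/
def sl {A : Type*} (n i : ℕ) (x : A) (w : ℕ → A) : ℕ → A :=
  fun j => if j < i then w j else if j = i then x else w (j + n)

/-- Evaluate on the beginning of a sequence. -/
def ev {A : Type*} {m : ℕ} (f : (Fin (m + 1) → A) → A) (w : ℕ → A) : A :=
  f (fun i => w i)

theorem hdel_seq {A : Type*} [Ring A] {r : ℕ} (f : (Fin (r + 1) → A) → A) (w : ℕ → A) :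
    hdel f (fun i => w i) = w 0 * ev f (sh 1 w)
      + ∑ j ∈ Finset.range (r + 1), (-1 : ℤ) ^ (j + 1) • ev f (ml j w)
      + (-1 : ℤ) ^ r • (ev f w * w (r + 1)) := by
  rw [Finset.sum_range]
  simp [hdel, ev, sh, ml, pow_add, add_comm]

theorem gcomp_seq {A : Type*} [Ring A] {m n : ℕ} (f : (Fin (m + 1) → A) → A)
    (g : (Fin (n + 1) → A) → A) (w : ℕ → A) :
    ev (gcomp f g) w = ∑ i ∈ Finset.range (m + 1), (-1 : ℤ) ^ (i * n) •
      ev f (sl n i (ev g (sh i w)) w) := by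
  rw [Finset.sum_range]
  simp [gcomp, ev, sh, sl]

theorem exists_seq {A : Type*} [Ring A] {N : ℕ} (v : Fin N → A) :
    ∃ w : ℕ → A, v = fun i : Fin N => w i :=
  ⟨fun k => if h : k < N then v ⟨k, h⟩ else 0, by ext i; simp⟩

theorem ev_congr {A : Type*} {m : ℕ} (f : (Fin (m + 1) → A) → A) {w w' : ℕ → A}
    (h : ∀ i < m + 1, w i = w' i) : ev f w = ev f w' := by
  unfold ev; congr 1; ext i; exact h i i.2

section
variable {K A : Type*} [CommRing K] [Ring A] [Algebra K A] {m : ℕ}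

/-- Slot map as an additive homomorphism. -/
def slotHom (f : MultilinearMap K (fun _ : Fin (m + 1) => A) A) (n i : ℕ) (hi : i < m + 1)
    (w : ℕ → A) : A →+ A :=
  (f.toLinearMap (fun j => sl n i 0 w j) ⟨i, hi⟩).toAddMonoidHom

theorem slotHom_apply (f : MultilinearMap K (fun _ : Fin (m + 1) => A) A) (n i : ℕ)
    (hi : i < m + 1) (w : ℕ → A) (x : A) : slotHom f n i hi w x = ev f (sl n i x w) := by
  simp only [slotHom, LinearMap.toAddMonoidHom_coe, MultilinearMap.toLinearMap_apply, ev]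
  congr 1
  ext j
  by_cases h : j = ⟨i, hi⟩
  · subst h; simp [sl]
  · have : (j : ℕ) ≠ i := fun h' => h (Fin.ext h')
    simp [h, sl, this]

/-- The term with both an insertion and a contraction. -/
def P (n : ℕ) (f : (Fin (m + 1) → A) → A) (g : (Fin (n + 1) → A) → A) (w : ℕ → A)
    (j t : ℕ) : A := ev f (ml j (sl n t (ev g (sh t w)) w))

theorem case_lt {n : ℕ} (f : (Fin (m + 1) → A) → A) (g : (Fin (n + 1) → A) → A) (w : ℕ → A)
    (i j : ℕ) (h : j < i) :
    ev f (sl n i (ev g (sh i (ml j w))) (ml j w)) = P n f g w j (i + 1) := by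
  have e : sh i (ml j w) = sh (i + 1) w := by
    ext k
    have h1 : ¬ (i + k < j) := by omega
    have h2 : ¬ (i + k = j) := by omega
    simp only [sh, ml, h1, h2, if_false]; congr 1; omega
  unfold P
  rw [e]
  congr 1
  ext k
  simp only [sl, ml]
  split_ifs <;> first | rfl | omega | (congr 1; omega)

theorem case_gt {n : ℕ} (f : (Fin (m + 1) → A) → A) (g : (Fin (n + 1) → A) → A) (w : ℕ → A)
    (i j : ℕ) (h : i < j) :
    ev f (sl n i (ev g (sh i (ml (j + n) w))) (ml (j + n) w)) = P n f g w j i := by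
  have e : ev g (sh i (ml (j + n) w)) = ev g (sh i w) := by
    apply ev_congr
    intro k hk
    have h1 : (i + k < j + n) := by omega
    simp only [sh, ml, h1, if_true]
  unfold P
  rw [e]
  congr 1
  ext k
  simp only [sl, ml]
  split_ifs <;> first | rfl | omega | (congr 1; omega) | (congr 2; omega)

theorem case_mid {n : ℕ} (f : MultilinearMap K (fun _ : Fin (m + 1) => A) A)
    (g : (Fin (n + 1) → A) → A) (hg : ∀ v : Fin (n + 2) → A, hdel g v = 0) (w : ℕ → A)
    (i : ℕ) (hi : i < m + 1) :
    ∑ k ∈ Finset.range (n + 1), (-1 : ℤ) ^ (k + 1) •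
      ev f (sl n i (ev g (sh i (ml (i + k) w))) (ml (i + k) w))
      = - P n f g w i (i + 1) - (-1 : ℤ) ^ n • P n f g w i i := by
  have h0 := hg (fun i' => sh i w i')
  rw [hdel_seq] at h0
  have h1 : ∀ k ∈ Finset.range (n + 1), (-1 : ℤ) ^ (k + 1) •
      ev f (sl n i (ev g (sh i (ml (i + k) w))) (ml (i + k) w)) =
      slotHom f n i hi (sl n i 0 (ml i (sl n i 0 w))) 0 +
      slotHom f (n + 1) i hi w ((-1 : ℤ) ^ (k + 1) • ev g (ml k (sh i w))) := by
    intro k hk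
    rw [Finset.mem_range] at hk
    rw [map_zero, zero_add, map_zsmul, slotHom_apply]
    congr 1
    have e : sh i (ml (i + k) w) = ml k (sh i w) := by
      ext l
      simp only [sh, ml]
      split_ifs <;> first | rfl | omega
    rw [e]
    congr 1
    ext l
    simp only [sl, ml]
    split_ifs <;> first | rfl | omega
  rw [Finset.sum_congr rfl h1]
  simp only [map_zero, zero_add]
  rw [← map_sum]
  have h2 : ∑ k ∈ Finset.range (n + 1), (-1 : ℤ) ^ (k + 1) • ev g (ml k (sh i w))
     = - (sh i w 0 * ev g (sh 1 (sh i w))) - (-1 : ℤ) ^ n • (ev g (sh i w) * sh i w (n + 1)) := by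
    rw [← sub_eq_zero, ← h0]; abel
  rw [h2, map_sub, map_neg, map_zsmul, slotHom_apply, slotHom_apply]
  have e : sh 1 (sh i w) = sh (i + 1) w := by
    ext l; simp only [sh]; congr 1; omega
  rw [e]
  unfold P
  congr 2
  · congr 1
    ext l
    simp only [sl, ml, sh]
    split_ifs <;> first | rfl | omega | (subst_vars; rfl) | (congr 1; omega)
  · congr 1
    ext l
    simp only [sl, ml, sh]
    split_ifs <;> first | rfl | omega | (subst_vars; congr 2; omega) | (congr 1; omega)

/-- The alternating sum for fixed insertion position. -/
theorem row {n : ℕ} (f : MultilinearMap K (fun _ : Fin (m + 1) => A) A)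
    (g : (Fin (n + 1) → A) → A) (hg : ∀ v : Fin (n + 2) → A, hdel g v = 0) (w : ℕ → A)
    (i : ℕ) (hi : i < m + 1) :
    ∑ j ∈ Finset.range (m + n + 1), (-1 : ℤ) ^ (j + 1) •
      ev f (sl n i (ev g (sh i (ml j w))) (ml j w))
      = ∑ j ∈ Finset.range (i + 1), (-1 : ℤ) ^ (j + 1) • P n f g w j (i + 1)
        + (-1 : ℤ) ^ n • ∑ j ∈ Finset.Ico i (m + 1), (-1 : ℤ) ^ (j + 1) • P n f g w j i := by
  obtain ⟨d, rfl⟩ : ∃ d, m = i + d := ⟨m - i, by omega⟩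
  rw [show i + d + n + 1 = i + (n + 1) + d by omega, Finset.sum_range_add,
    Finset.sum_range_add, Finset.sum_range_succ _ i, Finset.sum_Ico_eq_sum_range,
    show i + d + 1 - i = d + 1 by omega, Finset.sum_range_succ' _ d]
  have h1 := case_mid f g hg w i hi
  have h2 : ∑ x ∈ Finset.range (n + 1), (-1 : ℤ) ^ (i + x + 1) •
      ev f (sl n i (ev g (sh i (ml (i + x) w))) (ml (i + x) w))
      = (-1 : ℤ) ^ i • (- P n f g w i (i + 1) - (-1 : ℤ) ^ n • P n f g w i i) := by
    rw [← h1, Finset.smul_sum]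
    refine Finset.sum_congr rfl fun x _ => ?_
    rw [smul_smul, ← pow_add, add_assoc]
  rw [h2]
  have h3 : ∑ x ∈ Finset.range i, (-1 : ℤ) ^ (x + 1) •
      ev f (sl n i (ev g (sh i (ml x w))) (ml x w)) =
      ∑ x ∈ Finset.range i, (-1 : ℤ) ^ (x + 1) • P n f g w x (i + 1) := by
    refine Finset.sum_congr rfl fun x hx => ?_
    rw [case_lt _ _ _ _ _ (Finset.mem_range.1 hx)]
  have h4 : ∑ x ∈ Finset.range d, (-1 : ℤ) ^ (i + (n + 1) + x + 1) •
      ev f (sl n i (ev g (sh i (ml (i + (n + 1) + x) w))) (ml (i + (n + 1) + x) w)) =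
      (-1 : ℤ) ^ n • ∑ x ∈ Finset.range d, (-1 : ℤ) ^ (i + (x + 1) + 1) •
        P n f g w (i + (x + 1)) i := by
    rw [Finset.smul_sum]
    refine Finset.sum_congr rfl fun x hx => ?_
    rw [show i + (n + 1) + x = (i + (x + 1)) + n by omega, case_gt _ _ _ _ _ (by omega),
      smul_smul, ← pow_add]
    congr 2; omega
  rw [h3, h4]
  simp only [add_zero, smul_add, smul_sub, smul_neg, pow_succ (-1 : ℤ) i, mul_neg, mul_one,
    neg_smul]
  rw [smul_comm ((-1 : ℤ) ^ n) ((-1 : ℤ) ^ i)]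
  abel

theorem middle {n : ℕ} (f : MultilinearMap K (fun _ : Fin (m + 1) => A) A)
    (g : (Fin (n + 1) → A) → A) (hg : ∀ v : Fin (n + 2) → A, hdel g v = 0) (w : ℕ → A) :
    ∑ j ∈ Finset.range (m + n + 1), (-1 : ℤ) ^ (j + 1) • ev (gcomp f g) (ml j w)
      = (-1 : ℤ) ^ n • ∑ t ∈ Finset.range (m + 2), (-1 : ℤ) ^ (t * n) •
        ∑ j ∈ Finset.range (m + 1), (-1 : ℤ) ^ (j + 1) • P n f g w j t := by
  have hl : ∑ j ∈ Finset.range (m + n + 1), (-1 : ℤ) ^ (j + 1) • ev (gcomp f g) (ml j w)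
      = ∑ i ∈ Finset.range (m + 1), (-1 : ℤ) ^ (i * n) •
        (∑ j ∈ Finset.range (i + 1), (-1 : ℤ) ^ (j + 1) • P n f g w j (i + 1)
        + (-1 : ℤ) ^ n • ∑ j ∈ Finset.Ico i (m + 1), (-1 : ℤ) ^ (j + 1) • P n f g w j i) := by
    simp only [gcomp_seq, Finset.smul_sum]
    rw [Finset.sum_comm]
    refine Finset.sum_congr rfl fun i hi => ?_
    rw [← Finset.smul_sum (r := (-1 : ℤ) ^ n), ← row f g hg w i (Finset.mem_range.1 hi),
      Finset.smul_sum]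
    refine Finset.sum_congr rfl fun j _ => ?_
    rw [smul_comm]
  rw [hl]
  have hr : ∀ t ∈ Finset.range (m + 2), (-1 : ℤ) ^ (t * n) •
        ∑ j ∈ Finset.range (m + 1), (-1 : ℤ) ^ (j + 1) • P n f g w j t
      = (-1 : ℤ) ^ (t * n) • ∑ j ∈ Finset.range t, (-1 : ℤ) ^ (j + 1) • P n f g w j t
       + (-1 : ℤ) ^ (t * n) • ∑ j ∈ Finset.Ico t (m + 1), (-1 : ℤ) ^ (j + 1) • P n f g w j t := by
    intro t ht
    rw [← smul_add, Finset.sum_range_add_sum_Ico _ (by simpa [Nat.lt_succ_iff] using ht)]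
  rw [Finset.sum_congr rfl hr, Finset.sum_add_distrib, Finset.sum_range_succ' _ (m + 1),
    Finset.sum_range_succ _ (m + 1)]
  simp only [Finset.range_zero, Finset.sum_empty, smul_zero, add_zero, Finset.Ico_self, smul_add,
    Finset.sum_add_distrib]
  congr 1
  · rw [Finset.smul_sum]
    refine Finset.sum_congr rfl fun i _ => ?_
    rw [smul_smul, ← pow_add, show n + (i + 1) * n = i * n + (n + n) by ring, pow_add,
      Even.neg_one_pow ⟨n, rfl⟩, mul_one]
  · rw [Finset.smul_sum]
    refine Finset.sum_congr rfl fun i _ => ?_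
    rw [smul_comm]

theorem main_seq {n : ℕ} (f : MultilinearMap K (fun _ : Fin (m + 1) => A) A)
    (g : (Fin (n + 1) → A) → A) (hf : ∀ v : Fin (m + 2) → A, hdel f v = 0)
    (hg : ∀ v : Fin (n + 2) → A, hdel g v = 0) (w : ℕ → A) :
    hdel (gcomp f g) (fun i => w i) =
      - ((-1 : ℤ) ^ n • (ev g w * ev f (sh (n + 1) w)))
      - (-1 : ℤ) ^ (m + m * n) • (ev f w * ev g (sh (m + 1) w)) := by
  rw [hdel_seq, middle f g hg]
  have hP : ∀ t ∈ Finset.range (m + 2), (-1 : ℤ) ^ (t * n) •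
        ∑ j ∈ Finset.range (m + 1), (-1 : ℤ) ^ (j + 1) • P n f g w j t
      = - ((-1 : ℤ) ^ (t * n) • (sl n t (ev g (sh t w)) w 0 *
          ev f (sh 1 (sl n t (ev g (sh t w)) w))))
        - (-1 : ℤ) ^ (t * n) • ((-1 : ℤ) ^ m • (ev f (sl n t (ev g (sh t w)) w) *
          sl n t (ev g (sh t w)) w (m + 1))) := by
    intro t _
    have h0 := hf (fun i => sl n t (ev g (sh t w)) w i)
    rw [hdel_seq] at h0
    rw [← smul_neg, ← smul_sub]
    congr 1
    rw [← sub_eq_zero, ← h0]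
    unfold P
    abel
  rw [Finset.sum_congr rfl hP, Finset.sum_sub_distrib, Finset.sum_neg_distrib,
    Finset.sum_range_succ' _ (m + 1), Finset.sum_range_succ _ (m + 1)]
  have z0 : sl n 0 (ev g (sh 0 w)) w 0 * ev f (sh 1 (sl n 0 (ev g (sh 0 w)) w))
      = ev g w * ev f (sh (n + 1) w) := by
    have e0 : sh 0 w = w := by ext; simp [sh]
    rw [e0]
    congr 1
    congr 1
    ext k
    have : ¬ (1 + k = 0) := by omega
    simp only [sh, sl, Nat.not_lt_zero, this, if_false]
    congr 1; omega
  have zs : ∀ t, sl n (t + 1) (ev g (sh (t + 1) w)) w 0 *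
      ev f (sh 1 (sl n (t + 1) (ev g (sh (t + 1) w)) w))
      = w 0 * ev f (sl n t (ev g (sh t (sh 1 w))) (sh 1 w)) := by
    intro t
    have e0 : sh t (sh 1 w) = sh (t + 1) w := by
      ext k; simp only [sh]; congr 1; omega
    rw [e0]
    congr 1
    congr 1
    ext k
    simp only [sh, sl]
    split_ifs <;> first | rfl | omega | (congr 1; omega)
  have zl : ev f (sl n (m + 1) (ev g (sh (m + 1) w)) w) *
      sl n (m + 1) (ev g (sh (m + 1) w)) w (m + 1) = ev f w * ev g (sh (m + 1) w) := by
    congr 1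
    · apply ev_congr
      intro i hi
      simp [sl, hi]
    · simp [sl]
  have zm : ∀ t ∈ Finset.range (m + 1), (-1 : ℤ) ^ (t * n) • ((-1 : ℤ) ^ m •
      (ev f (sl n t (ev g (sh t w)) w) * sl n t (ev g (sh t w)) w (m + 1)))
      = (-1 : ℤ) ^ m • ((-1 : ℤ) ^ (t * n) • ev f (sl n t (ev g (sh t w)) w)
          * w (m + n + 1)) := by
    intro t ht
    have := Finset.mem_range.1 ht
    have h1 : ¬ (m + 1 < t) := by omega
    have h2 : ¬ (m + 1 = t) := by omega
    rw [smul_comm, smul_mul_assoc]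
    congr 3
    simp only [sl, h1, h2, if_false]
    congr 1; omega
  rw [Finset.sum_congr rfl zm, z0, zl]
  simp only [zs]
  rw [← Finset.smul_sum, ← Finset.sum_mul, ← gcomp_seq]
  have q : ∑ k ∈ Finset.range (m + 1), (-1 : ℤ) ^ ((k + 1) * n) •
      (w 0 * ev f (sl n k (ev g (sh k (sh 1 w))) (sh 1 w)))
      = (-1 : ℤ) ^ n • (w 0 * ev (gcomp f g) (sh 1 w)) := by
    rw [gcomp_seq, Finset.mul_sum, Finset.smul_sum]
    refine Finset.sum_congr rfl fun k _ => ?_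
    rw [mul_smul_comm, smul_smul, ← pow_add]
    congr 2; ring
  rw [q]
  simp only [smul_sub, smul_neg, smul_add, smul_smul, ← pow_add, zero_mul, pow_zero, mul_one,
    add_zero]
  have e1 : (-1 : ℤ) ^ (n + n) = 1 := Even.neg_one_pow ⟨n, rfl⟩
  have e2 : (-1 : ℤ) ^ (n + ((m + 1) * n + m)) = (-1) ^ (m + m * n) := by
    rw [show n + ((m + 1) * n + m) = (m + m * n) + (n + n) by ring, pow_add, e1, mul_one]
  rw [e1, e2, add_comm n m, one_smul]
  abel

theorem hdel_zsmul {r : ℕ} (c : ℤ) (F : (Fin (r + 1) → A) → A) (v : Fin (r + 2) → A) :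
    hdel (fun a => c • F a) v = c • hdel F v := by
  simp only [hdel, smul_add, Finset.smul_sum, mul_smul_comm, smul_mul_assoc]
  congr 1
  · congr 1
    refine Finset.sum_congr rfl fun j _ => ?_
    rw [smul_comm]
  · exact smul_comm _ _ _

end

end HochAux

/-- for Hochschild cocycles `f`, `g` (with `m+1` resp. `n+1` arguments,
so the sign exponents `mn` and `n` of the natural-language statement become
`(m+1)(n+1)` and `n+1`), `g⌣f − (−1)^{mn} f⌣g = (−1)^n δ(f∘g)`; in particular
`f⌣g − (−1)^{mn} g⌣f` is a Hochschild coboundary, so the induced cup product on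
Hochschild cohomology is graded commutative. -/
theorem cup_product_graded_commutative_up_to_coboundary
    {K A : Type*} [CommRing K] [Ring A] [Algebra K A]
    (m n : ℕ)
    (f : MultilinearMap K (fun _ : Fin (m + 1) => A) A)
    (g : MultilinearMap K (fun _ : Fin (n + 1) => A) A)
    (hf : ∀ v : Fin (m + 2) → A, hdel ⇑f v = 0)
    (hg : ∀ v : Fin (n + 2) → A, hdel ⇑g v = 0) :
    (∀ v : Fin (m + n + 2) → A,
      recast (show n + m + 2 = m + n + 2 by omega) (cup ⇑g ⇑f) v
          - (-1 : ℤ) ^ ((m + 1) * (n + 1)) • cup ⇑f ⇑g v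
        = (-1 : ℤ) ^ (n + 1) • hdel (gcomp ⇑f ⇑g) v) ∧
    ∃ F : (Fin (m + n + 1) → A) → A, ∀ v : Fin (m + n + 2) → A,
      cup ⇑f ⇑g v
          - (-1 : ℤ) ^ ((m + 1) * (n + 1)) •
              recast (show n + m + 2 = m + n + 2 by omega) (cup ⇑g ⇑f) v
        = hdel F v := by
  have key : ∀ v : Fin (m + n + 2) → A,
      recast (show n + m + 2 = m + n + 2 by omega) (cup ⇑g ⇑f) v
          - (-1 : ℤ) ^ ((m + 1) * (n + 1)) • cup ⇑f ⇑g v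
        = (-1 : ℤ) ^ (n + 1) • hdel (gcomp ⇑f ⇑g) v := by
    intro v
    obtain ⟨w, rfl⟩ := HochAux.exists_seq v
    rw [HochAux.main_seq f g hf hg w]
    have e1 : (-1 : ℤ) ^ (n + n) = 1 := Even.neg_one_pow ⟨n, rfl⟩
    have c1 : recast (show n + m + 2 = m + n + 2 by omega) (cup ⇑g ⇑f)
        (fun i : Fin (m + n + 2) => w i)
        = HochAux.ev g w * HochAux.ev f (HochAux.sh (n + 1) w) := rfl
    have c2 : cup ⇑f ⇑g (fun i : Fin (m + n + 2) => w i)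
        = HochAux.ev f w * HochAux.ev g (HochAux.sh (m + 1) w) := rfl
    rw [c1, c2]
    have e2 : (-1 : ℤ) ^ ((m + 1) * (n + 1)) = - (-1) ^ (n + (m + m * n)) := by
      rw [show (m + 1) * (n + 1) = n + (m + m * n) + 1 by ring, pow_succ]; ring
    rw [e2]
    simp only [pow_succ (-1 : ℤ) n, mul_neg, neg_mul, mul_one, neg_smul, smul_sub, smul_neg, smul_smul,
      ← pow_add, e1, one_smul]
    abel
  refine ⟨key, fun a => (-(-1 : ℤ) ^ ((m + 1) * (n + 1)) * (-1 : ℤ) ^ (n + 1)) • gcomp ⇑f ⇑g a,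
    fun v => ?_⟩
  rw [HochAux.hdel_zsmul, mul_smul, ← key v]
  have e3 : (-1 : ℤ) ^ ((m + 1) * (n + 1)) * (-1 : ℤ) ^ ((m + 1) * (n + 1)) = 1 := by
    rw [← pow_add]; exact Even.neg_one_pow ⟨_, rfl⟩
  simp only [smul_sub, neg_smul, neg_mul, smul_smul, e3, one_smul]
  abel
end
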